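/- There exists a universal constant C such that the following holds. Let (g_υ)_{υ∈ℝ^I} be a nice distribution of polynomials of degree at most d on ℝ^n, where d ≥ 2. Fix parameters R ≥ 1, 0 < ε ≤ 1, 0 < β < 1, and assume 0 ≤ λ ≤ (ε/R²)·(β/d)^{C·log d}. Then for x ∼ N(0,1)^n, except with probability at most β, the family ((g_υ)_{λ|x})_υ is (R,ε)-attenuated on average; i.e., E_υ[HyperVar_R[(g_υ)_{λ|x}]] ≤ ε·E_υ[‖(g_υ)_{λ|x}‖₂²]. -/

import Mathlib

open MeasureTheory ProbabilityTheory MvPolynomial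

/-- The standard Gaussian measure `N(0,1)^n` on `ℝ^n`. -/
noncomputable def gaussianN (n : ℕ) : Measure (Fin n → ℝ) :=
  Measure.pi fun _ => gaussianReal 0 1

/-- The normalized probabilists' Hermite polynomial `h_k = H_k / √(k!)`. -/
noncomputable def hermiteFn (k : ℕ) (t : ℝ) : ℝ :=
  ((Polynomial.hermite k).map (Int.castRingHom ℝ)).eval t / Real.sqrt (Nat.factorial k)

/-- The multivariate Hermite polynomial `h_α(x) = ∏ i, h_{α i}(x i)`. -/
noncomputable def hermiteMv {n : ℕ} (α : Fin n → ℕ) (x : Fin n → ℝ) : ℝ :=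
  ∏ i, hermiteFn (α i) (x i)

/-- Hermite coefficient `f̂(α) = E_{x ∼ N(0,1)^n}[f(x)·h_α(x)]` of a function. -/
noncomputable def hermiteCoeffF {n : ℕ} (f : (Fin n → ℝ) → ℝ) (α : Fin n → ℕ) : ℝ :=
  ∫ x, f x * hermiteMv α x ∂(gaussianN n)

/-- Hermite coefficient `ĝ(α)` of a polynomial. -/
noncomputable def hermiteCoeff {n : ℕ} (g : MvPolynomial (Fin n) ℝ) (α : Fin n → ℕ) : ℝ :=
  hermiteCoeffF (fun x => eval x g) α

/-- The squared Gaussian 2-norm `‖g‖₂² = E_{x ∼ N(0,1)^n}[g(x)²]`. -/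
noncomputable def norm2sq {n : ℕ} (g : MvPolynomial (Fin n) ℝ) : ℝ :=
  ∫ x, (eval x g) ^ 2 ∂(gaussianN n)

/-- The `λ`-zoom of `g` at `x`: `g_{λ|x}(y) = g(√(1-λ)·x + √λ·y)`, as a polynomial in `y`. -/
noncomputable def zoom {n : ℕ} (g : MvPolynomial (Fin n) ℝ) (lam : ℝ) (x : Fin n → ℝ) :
    MvPolynomial (Fin n) ℝ :=
  aeval (fun i => C (Real.sqrt (1 - lam) * x i) + C (Real.sqrt lam) * X i) g

/-- `HyperVar_R[g^{≥m}] = Σ_{|α| ≥ m} R^{2|α|}·ĝ(α)²`. -/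
noncomputable def hyperVarGE {n : ℕ} (R : ℝ) (m : ℕ) (g : MvPolynomial (Fin n) ℝ) : ℝ :=
  ∑' α : Fin n → ℕ, if m ≤ ∑ i, α i then R ^ (2 * ∑ i, α i) * hermiteCoeff g α ^ 2 else 0

/-- `HyperVar_R[g] = Σ_{α ≠ 0} R^{2|α|}·ĝ(α)²`. -/
noncomputable def hyperVar {n : ℕ} (R : ℝ) (g : MvPolynomial (Fin n) ℝ) : ℝ :=
  hyperVarGE R 1 g

/-- A nice distribution of polynomials of degree at most `d` on `ℝ^n`, indexed by
`υ ∈ ℝ^I`: each `g υ` has degree at most `d` and each coefficient of `g υ` is a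
polynomial of degree at most `d` in `υ`. -/
def NiceFamily (n I d : ℕ) (g : (Fin I → ℝ) → MvPolynomial (Fin n) ℝ) : Prop :=
  (∀ υ, (g υ).totalDegree ≤ d) ∧
  ∀ m : Fin n →₀ ℕ, ∃ P : MvPolynomial (Fin I) ℝ,
    P.totalDegree ≤ d ∧ ∀ υ, coeff m (g υ) = eval υ P

/-!
A derivative of the zoom `g (√(1 - λ) x + √λ y)` in the base point `x` is `√(1 - λ) / √λ` times the
corresponding derivative in `y`. The Hermite weight of the zoom at level `k + 1` is therefore at
most `λ / (1 - λ)` times the squared gradient, as functions of `x`, of its Hermite coefficients at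
level `k`. At a Gaussian point the gradient of a family of polynomials rarely dwarfs its values: a
random linear combination of the family, restricted to a random circle `θ ↦ cos θ x + sin θ y`, is
a trigonometric polynomial, whose logarithmic derivative is large only near its few complex zeros.
Hence for most `x` the weights decay geometrically in the level. The average over `υ` enters only
through the Gram matrix of the coefficients, so finitely many polynomials can stand in for it.
-/

/-! ### Trigonometric polynomials -/

/-- `F : ℝ → ℝ` is a trigonometric polynomial of degree at most `d`, encoded by clearing
denominators in `F θ = ∑_{|k| ≤ d} c_k e^{ikθ}`: `e^{idθ} F θ` is a complex polynomial of degree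
at most `2d` in `e^{iθ}`. -/
def IsTrigPolynomial (d : ℕ) (F : ℝ → ℝ) : Prop :=
  ∃ G : Polynomial ℂ, G.natDegree ≤ 2 * d ∧
    ∀ θ : ℝ, (F θ : ℂ) * Complex.exp (θ * Complex.I) ^ d = G.eval (Complex.exp (θ * Complex.I))

namespace IsTrigPolynomial

variable {d e : ℕ} {F H : ℝ → ℝ}

theorem const (c : ℝ) : IsTrigPolynomial 0 fun _ => c :=
  ⟨Polynomial.C (c : ℂ), by simp, by simp⟩

theorem mono (hF : IsTrigPolynomial d F) (hde : d ≤ e) : IsTrigPolynomial e F := by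
  obtain ⟨G, hdeg, hG⟩ := hF
  refine ⟨G * Polynomial.X ^ (e - d), ?_, fun θ => ?_⟩
  · have := G.natDegree_mul_le (q := Polynomial.X ^ (e - d))
    rw [Polynomial.natDegree_X_pow] at this
    omega
  · rw [Polynomial.eval_mul, ← hG, Polynomial.eval_pow, Polynomial.eval_X, mul_assoc, ← pow_add,
      Nat.add_sub_cancel' hde]

theorem mul (hF : IsTrigPolynomial d F) (hH : IsTrigPolynomial e H) :
    IsTrigPolynomial (d + e) fun θ => F θ * H θ := by
  obtain ⟨G, hdeg, hG⟩ := hF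
  obtain ⟨K, hdeg', hK⟩ := hH
  refine ⟨G * K, Polynomial.natDegree_mul_le.trans (by omega), fun θ => ?_⟩
  rw [Polynomial.eval_mul, ← hG, ← hK]
  push_cast
  ring

theorem pow (hF : IsTrigPolynomial d F) (k : ℕ) : IsTrigPolynomial (k * d) fun θ => F θ ^ k := by
  induction k with
  | zero => simpa using const 1
  | succ k ih => simpa only [pow_succ, Nat.succ_mul] using ih.mul hF

theorem prod {ι : Type*} (s : Finset ι) {F : ι → ℝ → ℝ} {d : ι → ℕ}
    (hF : ∀ i ∈ s, IsTrigPolynomial (d i) (F i)) :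
    IsTrigPolynomial (∑ i ∈ s, d i) fun θ => ∏ i ∈ s, F i θ := by
  classical
  induction s using Finset.induction_on with
  | empty => simpa using const 1
  | insert i s hi ih =>
    simp only [Finset.sum_insert hi, Finset.prod_insert hi]
    exact (hF i (Finset.mem_insert_self i s)).mul
      (ih fun j hj => hF j (Finset.mem_insert_of_mem hj))

theorem sum {ι : Type*} (s : Finset ι) {F : ι → ℝ → ℝ}
    (hF : ∀ i ∈ s, IsTrigPolynomial d (F i)) : IsTrigPolynomial d fun θ => ∑ i ∈ s, F i θ := by
  choose! G hdeg hG using hF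
  refine ⟨∑ i ∈ s, G i, Polynomial.natDegree_sum_le_of_forall_le _ _ hdeg, fun θ => ?_⟩
  rw [Polynomial.eval_finsetSum, Complex.ofReal_sum, Finset.sum_mul]
  exact Finset.sum_congr rfl fun i hi => hG i hi θ

theorem cos_mul_add_sin_mul (a b : ℝ) :
    IsTrigPolynomial 1 fun θ => Real.cos θ * a + Real.sin θ * b := by
  refine ⟨Polynomial.C (((a : ℂ) - b * Complex.I) / 2) * Polynomial.X ^ 2 +
    Polynomial.C (((a : ℂ) + b * Complex.I) / 2), by compute_degree, fun θ => ?_⟩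
  simp only [Polynomial.eval_add, Polynomial.eval_mul, Polynomial.eval_C, Polynomial.eval_pow,
    Polynomial.eval_X, Complex.exp_mul_I]
  push_cast
  linear_combination ((a : ℂ) / 2 + b * Complex.I / 2) * Complex.sin_sq_add_cos_sq (θ : ℂ) +
    (b * Complex.I * Complex.sin θ ^ 2 / 2 + b * Complex.cos θ * Complex.sin θ
      - a * Complex.sin θ ^ 2 / 2) * Complex.I_sq

theorem eval_mvPolynomial {ι : Type*} [Finite ι] {f : MvPolynomial ι ℝ} (hf : f.totalDegree ≤ d)
    {c : ι → ℝ → ℝ} (hc : ∀ i, IsTrigPolynomial 1 (c i)) :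
    IsTrigPolynomial d fun θ => eval (fun i => c i θ) f := by
  have := Fintype.ofFinite ι
  simp only [eval_eq']
  refine sum _ fun m hm => ?_
  have hdeg : ∑ i, m i * 1 ≤ d := by
    simpa [Finsupp.sum_fintype] using (le_totalDegree hm).trans hf
  simpa using ((const (coeff m f)).mul (prod Finset.univ fun i _ => (hc i).pow (m i))).mono
    (by omega)

end IsTrigPolynomial

theorem norm_eval_derivative_le_of_forall_roots {K : Type*} [NormedField K] [IsAlgClosed K]
    (G : Polynomial K) {z : K} {δ : ℝ} (hδ : 0 < δ) (hroots : ∀ r ∈ G.roots, δ ≤ ‖z - r‖) :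
    ‖G.derivative.eval z‖ ≤ G.natDegree / δ * ‖G.eval z‖ := by
  rcases eq_or_ne G 0 with rfl | hG0
  · simp
  have hGz : G.eval z ≠ 0 := fun hz => by
    have := hroots z ((Polynomial.mem_roots hG0).2 hz)
    rw [sub_self, norm_zero] at this
    exact hδ.not_ge this
  rw [(IsAlgClosed.splits G).eval_derivative_eq_eval_mul_sum hGz, norm_mul, mul_comm]
  gcongr
  calc ‖(G.roots.map fun r => 1 / (z - r)).sum‖
      ≤ (G.roots.map fun r => ‖1 / (z - r)‖).sum := by
        simpa only [Multiset.map_map, Function.comp_def] using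
          norm_multiset_sum_le (G.roots.map fun r => 1 / (z - r))
    _ ≤ (G.roots.map fun _ => 1 / δ).sum := Multiset.sum_map_le_sum_map _ _ fun r hr => by
        rw [norm_div, norm_one]
        exact one_div_le_one_div_of_le hδ (hroots r hr)
    _ = G.roots.card / δ := by
        rw [Multiset.map_const', Multiset.sum_replicate, nsmul_eq_mul, mul_one_div]
    _ ≤ G.natDegree / δ := by
        gcongr
        exact G.card_roots'

theorem hasDerivAt_exp_ofReal_mul_I (θ : ℝ) :
    HasDerivAt (fun s : ℝ => Complex.exp (s * Complex.I))
      (Complex.exp (θ * Complex.I) * Complex.I) θ := by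
  simpa using (((Complex.ofRealCLM.hasDerivAt (x := θ)).mul_const Complex.I).cexp)

theorem deriv_mul_exp_pow_eq {d : ℕ} {F : ℝ → ℝ} {G : Polynomial ℂ}
    (hG : ∀ θ : ℝ, (F θ : ℂ) * Complex.exp (θ * Complex.I) ^ d =
      G.eval (Complex.exp (θ * Complex.I)))
    {F' θ : ℝ} (hF' : HasDerivAt F F' θ) :
    (F' : ℂ) * Complex.exp (θ * Complex.I) ^ d =
      G.derivative.eval (Complex.exp (θ * Complex.I)) * (Complex.exp (θ * Complex.I) * Complex.I) -
        d * Complex.I * G.eval (Complex.exp (θ * Complex.I)) := by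
  have hexp := hasDerivAt_exp_ofReal_mul_I θ
  have hprod := hF'.ofReal_comp.mul (hexp.pow d)
  have hcomp : HasDerivAt (fun s : ℝ => G.eval (Complex.exp (s * Complex.I)))
      (G.derivative.eval (Complex.exp (θ * Complex.I)) *
        (Complex.exp (θ * Complex.I) * Complex.I)) θ :=
    (G.hasDerivAt _).comp θ hexp
  rw [hcomp.unique (hprod.congr_of_eventuallyEq (.of_forall fun s => (hG s).symm)), ← hG θ]
  rcases d with - | d
  · simp
  · simp only [Pi.pow_apply, Nat.add_sub_cancel]
    ring

theorem abs_deriv_le_of_forall_roots {d : ℕ} {F : ℝ → ℝ} {G : Polynomial ℂ}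
    (hdeg : G.natDegree ≤ 2 * d)
    (hG : ∀ θ : ℝ, (F θ : ℂ) * Complex.exp (θ * Complex.I) ^ d =
      G.eval (Complex.exp (θ * Complex.I)))
    {F' θ δ : ℝ} (hF' : HasDerivAt F F' θ) (hδ : 0 < δ) (hδ1 : δ ≤ 1)
    (hroots : ∀ r ∈ G.roots, δ ≤ ‖Complex.exp (θ * Complex.I) - r‖) :
    |F'| ≤ 3 * d / δ * |F θ| := by
  have hnorm : ‖G.eval (Complex.exp (θ * Complex.I))‖ = |F θ| := by
    simp [← hG, Complex.norm_exp_ofReal_mul_I]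
  have hderiv := norm_eval_derivative_le_of_forall_roots G hδ hroots
  have hdegR : (G.natDegree : ℝ) ≤ 2 * d := by exact_mod_cast hdeg
  calc |F'| = ‖(F' : ℂ) * Complex.exp (θ * Complex.I) ^ d‖ := by
        simp [Complex.norm_exp_ofReal_mul_I]
    _ ≤ ‖G.derivative.eval (Complex.exp (θ * Complex.I))‖ + d * |F θ| := by
        rw [deriv_mul_exp_pow_eq hG hF']
        refine (norm_sub_le _ _).trans_eq ?_
        simp [Complex.norm_exp_ofReal_mul_I, hnorm]
    _ ≤ 2 * d / δ * |F θ| + d / δ * |F θ| := by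
        rw [hnorm] at hderiv
        gcongr
        · exact hderiv.trans (by gcongr)
        · exact le_div_self d.cast_nonneg hδ hδ1
    _ = 3 * d / δ * |F θ| := by ring

theorem two_div_pi_mul_abs_sub_le_norm_exp_sub_exp {a b : ℝ} (hab : |a - b| ≤ Real.pi) :
    2 / Real.pi * |a - b| ≤ ‖Complex.exp (a * Complex.I) - Complex.exp (b * Complex.I)‖ := by
  have hfactor : Complex.exp (a * Complex.I) - Complex.exp (b * Complex.I) =
      Complex.exp (b * Complex.I) * (Complex.exp (Complex.I * ((a - b : ℝ) : ℂ)) - 1) := by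
    rw [mul_sub, ← Complex.exp_add, mul_one]
    congr 2
    push_cast
    ring
  rw [hfactor, norm_mul, Complex.norm_exp_ofReal_mul_I, one_mul,
    Complex.norm_exp_I_mul_ofReal_sub_one, norm_mul, Real.norm_two, Real.norm_eq_abs]
  have hsin : 2 / Real.pi * |(a - b) / 2| ≤ |Real.sin ((a - b) / 2)| := by
    refine Real.mul_abs_le_abs_sin ?_
    rw [abs_div, abs_two]
    linarith
  rw [abs_div, abs_two] at hsin
  linarith

theorem volume_arc_le (r : ℂ) (δ : ℝ) :
    volume.restrict (Set.Icc (0 : ℝ) 1) {θ : ℝ | ‖Complex.exp (θ * Complex.I) - r‖ < δ} ≤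
      ENNReal.ofReal (8 * δ) := by
  rw [Measure.restrict_apply' measurableSet_Icc]
  rcases Set.eq_empty_or_nonempty
    ({θ : ℝ | ‖Complex.exp (θ * Complex.I) - r‖ < δ} ∩ Set.Icc 0 1) with hempty | ⟨a, har, ha⟩
  · simp [hempty]
  have hsub : {θ : ℝ | ‖Complex.exp (θ * Complex.I) - r‖ < δ} ∩ Set.Icc 0 1 ⊆
      Metric.closedBall a (4 * δ) := by
    rintro b ⟨hbr, hb⟩
    have hba : |b - a| ≤ 1 := abs_le.2 ⟨by linarith [hb.1, ha.2], by linarith [hb.2, ha.1]⟩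
    have hchord := two_div_pi_mul_abs_sub_le_norm_exp_sub_exp
      (hba.trans (by linarith [Real.pi_gt_three]))
    have hdist : ‖Complex.exp (b * Complex.I) - Complex.exp (a * Complex.I)‖ ≤ 2 * δ := by
      have := norm_sub_le_norm_sub_add_norm_sub (Complex.exp (b * Complex.I)) r
        (Complex.exp (a * Complex.I))
      rw [norm_sub_rev r] at this
      linarith [Set.mem_ofPred_eq ▸ har, Set.mem_ofPred_eq ▸ hbr]
    have hpi : 1 / 2 ≤ 2 / Real.pi := by
      rw [div_le_div_iff₀ two_pos Real.pi_pos]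
      linarith [Real.pi_le_four]
    rw [Metric.mem_closedBall, Real.dist_eq]
    nlinarith [abs_nonneg (b - a)]
  refine (measure_mono hsub).trans_eq ?_
  rw [Real.volume_closedBall]
  ring_nf

theorem setOf_lt_abs_deriv_subset {d : ℕ} {F F' : ℝ → ℝ} {G : Polynomial ℂ}
    (hdeg : G.natDegree ≤ 2 * d)
    (hG : ∀ θ : ℝ, (F θ : ℂ) * Complex.exp (θ * Complex.I) ^ d =
      G.eval (Complex.exp (θ * Complex.I)))
    (hF' : ∀ θ, HasDerivAt F (F' θ) θ) (hd : 1 ≤ d) {t : ℝ} (ht : 3 * d ≤ t) :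
    {θ | t * |F θ| < |F' θ|} ⊆
      ⋃ r ∈ G.roots.toFinset, {θ : ℝ | ‖Complex.exp (θ * Complex.I) - r‖ < 3 * d / t} := by
  have hd0 : (0 : ℝ) < 3 * d := by positivity
  intro θ hθ
  by_contra! hfar
  simp only [Set.mem_iUnion, Multiset.mem_toFinset, not_exists, Set.mem_ofPred_eq, not_lt] at hfar
  have hle := abs_deriv_le_of_forall_roots hdeg hG (hF' θ) (div_pos hd0 (hd0.trans_le ht))
    ((div_le_one (hd0.trans_le ht)).2 ht) hfar
  rw [div_div_cancel₀ hd0.ne'] at hle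
  exact hle.not_gt hθ

theorem IsTrigPolynomial.volume_lt_abs_deriv_le {d : ℕ} {F F' : ℝ → ℝ} (hF : IsTrigPolynomial d F)
    (hF' : ∀ θ, HasDerivAt F (F' θ) θ) (hd : 1 ≤ d) {t : ℝ} (ht : 0 < t) :
    volume.restrict (Set.Icc (0 : ℝ) 1) {θ | t * |F θ| < |F' θ|} ≤
      ENNReal.ofReal (48 * d ^ 2 / t) := by
  have hd1 : (1 : ℝ) ≤ d := by exact_mod_cast hd
  rcases lt_or_ge t (3 * d) with hlt | hle
  · calc volume.restrict (Set.Icc (0 : ℝ) 1) {θ | t * |F θ| < |F' θ|}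
        ≤ volume.restrict (Set.Icc (0 : ℝ) 1) Set.univ := measure_mono (Set.subset_univ _)
      _ = ENNReal.ofReal 1 := by simp
      _ ≤ ENNReal.ofReal (48 * d ^ 2 / t) := by
          gcongr
          rw [one_le_div ht]
          nlinarith
  obtain ⟨G, hdeg, hG⟩ := hF
  have hcard : (G.roots.toFinset.card : ℝ) ≤ 2 * d := by
    exact_mod_cast (Multiset.toFinset_card_le _).trans (G.card_roots'.trans hdeg)
  calc volume.restrict (Set.Icc (0 : ℝ) 1) {θ | t * |F θ| < |F' θ|}
      ≤ ∑ _r ∈ G.roots.toFinset, ENNReal.ofReal (8 * (3 * d / t)) :=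
        (measure_mono (setOf_lt_abs_deriv_subset hdeg hG hF' hd hle)).trans
          ((measure_biUnion_finset_le _ _).trans
            (Finset.sum_le_sum fun r _ => volume_arc_le r _))
    _ = ENNReal.ofReal (G.roots.toFinset.card * (8 * (3 * d / t))) := by
        rw [Finset.sum_const, nsmul_eq_mul, ENNReal.ofReal_mul (Nat.cast_nonneg _),
          ENNReal.ofReal_natCast]
    _ ≤ ENNReal.ofReal (2 * d * (8 * (3 * d / t))) := by gcongr
    _ = ENNReal.ofReal (48 * d ^ 2 / t) := by
        congr 1
        ring

/-! ### Measure-theoretic inequalities -/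

section MeasureInequalities

variable {Ω Ω' : Type*} [MeasurableSpace Ω] [MeasurableSpace Ω'] {μ : Measure Ω} {ν : Measure Ω'}

/-- An `L²` form of the Paley–Zygmund inequality: `f - g` is at most `f` on `{g < f}` and
nonpositive elsewhere. -/
theorem integral_sub_integral_le_sqrt_mul_sqrt [IsFiniteMeasure μ] {f g : Ω → ℝ}
    (hf : MemLp f 2 μ) (hg : Integrable g μ) (hf0 : 0 ≤ f) (hg0 : 0 ≤ g) (hfm : Measurable f)
    (hgm : Measurable g) :
    ∫ a, f a ∂μ - ∫ a, g a ∂μ ≤ √(∫ a, f a ^ 2 ∂μ) * √(μ.real {a | g a < f a}) := by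
  have hfi : Integrable f μ := hf.integrable one_le_two
  have hS : MeasurableSet {a | g a < f a} := measurableSet_lt hgm hfm
  have hpos : ∫ a, f a ∂μ - ∫ a, g a ∂μ ≤ ∫ a in {a | g a < f a}, f a ∂μ := by
    rw [← integral_sub hfi hg, ← integral_indicator hS]
    refine integral_mono (hfi.sub hg) (hfi.indicator hS) fun a => ?_
    by_cases ha : g a < f a
    · rw [Set.indicator_of_mem (by exact ha)]
      exact sub_le_self _ (hg0 a)
    · rw [Set.indicator_of_notMem (by exact ha)]
      linarith
  have hholder := integral_mul_le_Lp_mul_Lq_of_nonneg (μ := μ.restrict {a | g a < f a})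
    Real.HolderConjugate.two_two (.of_forall hf0) (.of_forall fun _ => zero_le_one)
    (by simpa using hf.restrict _) (memLp_const (1 : ℝ))
  simp only [mul_one, Real.rpow_two, one_pow, integral_const, measureReal_restrict_apply_univ,
    smul_eq_mul, ← Real.sqrt_eq_rpow] at hholder
  have hsq : ∫ a in {a | g a < f a}, f a ^ 2 ∂μ ≤ ∫ a, f a ^ 2 ∂μ :=
    setIntegral_le_integral hf.integrable_sq (.of_forall fun a => sq_nonneg _)
  exact hpos.trans (hholder.trans (by gcongr))

theorem integral_abs_le_sqrt_integral_sq [IsProbabilityMeasure μ] {f : Ω → ℝ} (hf : MemLp f 2 μ)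
    (hfm : Measurable f) : ∫ a, |f a| ∂μ ≤ √(∫ a, f a ^ 2 ∂μ) := by
  have h := integral_sub_integral_le_sqrt_mul_sqrt hf.abs (integrable_zero Ω ℝ μ)
    (fun a => abs_nonneg _) le_rfl hfm.abs measurable_zero
  simp only [Pi.zero_apply, Pi.abs_apply, sq_abs, integral_zero, sub_zero] at h
  exact h.trans (mul_le_of_le_one_right (Real.sqrt_nonneg _)
    (Real.sqrt_le_one.2 measureReal_le_one))

theorem sqrt_sum_sq_integral_le_integral_sqrt {ι : Type*} [Fintype ι] {f : ι → Ω → ℝ}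
    (hf : ∀ i, Integrable (f i) μ) :
    √(∑ i, (∫ a, f i a ∂μ) ^ 2) ≤ ∫ a, √(∑ i, f i a ^ 2) ∂μ := by
  have h := norm_integral_le_integral_norm (μ := μ) fun a => WithLp.toLp 2 fun i => f i a
  simpa only [EuclideanSpace.norm_eq, Real.norm_eq_abs, sq_abs,
    eval_integral_piLp (f := fun a => WithLp.toLp 2 fun i => f i a) hf] using h

theorem integrable_sqrt_sum_sq {ι : Type*} [Fintype ι] {f : ι → Ω → ℝ}
    (hf : ∀ i, Integrable (f i) μ) : Integrable (fun a => √(∑ i, f i a ^ 2)) μ := by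
  have h : Integrable (fun a => WithLp.toLp 2 fun i => f i a : Ω → EuclideanSpace ℝ ι) μ :=
    .of_eval_piLp hf
  simpa only [EuclideanSpace.norm_eq, Real.norm_eq_abs, sq_abs] using h.norm

theorem mul_measure_le_prod_of_le_section [SFinite ν] {B : Set (Ω × Ω')} (hB : MeasurableSet B)
    {G : Set Ω} {c : ENNReal} (hG : ∀ x ∈ G, c ≤ ν (Prod.mk x ⁻¹' B)) :
    c * μ G ≤ (μ.prod ν) B := by
  rw [Measure.prod_apply hB]
  exact (mul_le_mul_right (measure_mono hG) c).trans
    (mul_meas_ge_le_lintegral (measurable_measure_prodMk_left hB) c)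

theorem prod_apply_le_of_section_le [SFinite μ] [IsProbabilityMeasure ν] {B : Set (Ω × Ω')}
    (hB : MeasurableSet B) {c : ENNReal} (hc : ∀ y, μ ((·, y) ⁻¹' B) ≤ c) :
    (μ.prod ν) B ≤ c := by
  rw [Measure.prod_apply_symm hB]
  simpa using lintegral_mono (μ := ν) hc

theorem measure_le_of_forall_measurePreserving [IsProbabilityMeasure μ] [IsProbabilityMeasure ν]
    {r : Ω' → Ω → Ω} (hr : Measurable r.uncurry) (hpres : ∀ θ, MeasurePreserving (r θ) μ μ)
    {B : Set Ω} (hB : MeasurableSet B) {c : ENNReal} (hc : ∀ z, ν {θ | r θ z ∈ B} ≤ c) :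
    μ B ≤ c := by
  calc μ B = ∫⁻ _, μ B ∂ν := by simp
    _ = ∫⁻ θ, μ (Prod.mk θ ⁻¹' (r.uncurry ⁻¹' B)) ∂ν :=
        lintegral_congr fun θ => ((hpres θ).measure_preimage hB.nullMeasurableSet).symm
    _ = (ν.prod μ) (r.uncurry ⁻¹' B) := (Measure.prod_apply (hr hB)).symm
    _ ≤ c := prod_apply_le_of_section_le (hr hB) hc

end MeasureInequalities

/-! ### The standard Gaussian measure on `ι → ℝ` -/

/-- The standard Gaussian measure `N(0,1)^ι`, for an arbitrary finite index type. -/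
noncomputable abbrev stdGaussianPi (ι : Type*) [Fintype ι] : Measure (ι → ℝ) :=
  Measure.pi fun _ => gaussianReal 0 1

theorem integrable_pow_gaussianReal (k : ℕ) :
    Integrable (fun t : ℝ => t ^ k) (gaussianReal 0 1) :=
  (memLp_id_gaussianReal (μ := 0) (v := 1) k).integrable_norm_pow'.mono' (by fun_prop)
    (.of_forall fun t => by simp)

theorem integrable_eval_gaussianReal (q : Polynomial ℝ) :
    Integrable (fun t => q.eval t) (gaussianReal 0 1) := by
  simp only [Polynomial.eval_eq_sum_range]
  exact integrable_finsetSum _ fun k _ => (integrable_pow_gaussianReal k).const_mul _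

theorem hasDerivAt_gaussianPDFReal (t : ℝ) :
    HasDerivAt (gaussianPDFReal 0 1) (-t * gaussianPDFReal 0 1 t) t := by
  have hexp : HasDerivAt (fun x : ℝ => -(x - 0) ^ 2 / (2 * ((1 : NNReal) : ℝ))) (-t) t := by
    refine ((((hasDerivAt_id t).sub_const 0).pow 2).neg.div_const _).congr_deriv ?_
    simp only [id, NNReal.coe_one, Nat.cast_ofNat]
    ring
  rw [gaussianPDFReal_def]
  exact (hexp.exp.const_mul _).congr_deriv (by ring)

theorem integral_mul_eval_gaussianReal (q : Polynomial ℝ) :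
    ∫ t, t * q.eval t ∂gaussianReal 0 1 = ∫ t, q.derivative.eval t ∂gaussianReal 0 1 := by
  have hint (p : Polynomial ℝ) : Integrable fun t => gaussianPDFReal 0 1 t * p.eval t := by
    have h := integrable_eval_gaussianReal p
    rw [gaussianReal_of_var_ne_zero _ one_ne_zero, integrable_withDensity_iff_integrable_smul'
      (measurable_gaussianPDF _ _) (.of_forall fun _ => gaussianPDF_lt_top)] at h
    simpa only [toReal_gaussianPDF, smul_eq_mul] using h
  have hder (t : ℝ) : HasDerivAt (fun t => gaussianPDFReal 0 1 t * q.eval t)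
      (gaussianPDFReal 0 1 t * (q.derivative - Polynomial.X * q).eval t) t :=
    ((hasDerivAt_gaussianPDFReal t).mul (q.hasDerivAt t)).congr_deriv (by
      simp only [Polynomial.eval_sub, Polynomial.eval_mul, Polynomial.eval_X]
      ring)
  have hzero := integral_eq_zero_of_hasDerivAt_of_integrable hder (hint _) (hint q)
  have hgauss := integral_gaussianReal_eq_integral_smul (μ := 0) (v := 1) one_ne_zero
    (f := fun t => (q.derivative - Polynomial.X * q).eval t)
  simp only [smul_eq_mul, hzero] at hgauss
  simp only [Polynomial.eval_sub] at hgauss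
  rw [integral_sub (integrable_eval_gaussianReal _) (integrable_eval_gaussianReal _)] at hgauss
  simpa only [Polynomial.eval_mul, Polynomial.eval_X] using (sub_eq_zero.1 hgauss).symm

theorem integral_pow_succ_gaussianReal (k : ℕ) :
    ∫ t, t ^ (k + 1) ∂gaussianReal 0 1 = k * ∫ t, t ^ (k - 1) ∂gaussianReal 0 1 := by
  have h := integral_mul_eval_gaussianReal (Polynomial.X ^ k)
  simpa only [Polynomial.eval_pow, Polynomial.eval_X, ← pow_succ', Polynomial.derivative_X_pow,
    Polynomial.eval_mul, Polynomial.eval_C, integral_const_mul] using h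

theorem integral_sq_gaussianReal : ∫ t, t ^ 2 ∂gaussianReal 0 1 = 1 := by
  simp [integral_pow_succ_gaussianReal 1]

theorem integral_pow_four_gaussianReal : ∫ t, t ^ 4 ∂gaussianReal 0 1 = 3 := by
  simp [integral_pow_succ_gaussianReal 3, integral_sq_gaussianReal]

theorem half_le_integral_abs_gaussianReal : 1 / 2 ≤ ∫ t, |t| ∂gaussianReal 0 1 := by
  have hint := integrable_pow_gaussianReal
  -- The quartic is chosen to have integral greater than `1/2` and to stay below `|t|`.
  have hpoint (t : ℝ) : 5 / 6 * t ^ 2 - 1 / 10 * t ^ 4 ≤ |t| := by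
    have hnonneg : 0 ≤ |t| * ((|t| - 5 / 3) ^ 2 * (|t| + 10 / 3)) := by positivity
    rw [← sq_abs, ← Even.pow_abs (by decide : Even 4)]
    nlinarith [abs_nonneg t]
  calc (1 / 2 : ℝ) ≤ ∫ t, (5 / 6 * t ^ 2 - 1 / 10 * t ^ 4) ∂gaussianReal 0 1 := by
        rw [integral_sub ((hint 2).const_mul _) ((hint 4).const_mul _), integral_const_mul,
          integral_const_mul, integral_sq_gaussianReal, integral_pow_four_gaussianReal]
        norm_num
    _ ≤ ∫ t, |t| ∂gaussianReal 0 1 :=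
        integral_mono (((hint 2).const_mul _).sub ((hint 4).const_mul _))
          (by simpa using (hint 1).abs) hpoint

section StdGaussianPi

open scoped Matrix

variable {ι κ : Type*} [Fintype ι] [Fintype κ]

theorem integrable_eval_stdGaussianPi (f : MvPolynomial ι ℝ) :
    Integrable (fun x => eval x f) (stdGaussianPi ι) := by
  simp only [eval_eq']
  refine integrable_finsetSum _ fun m _ => Integrable.const_mul ?_ _
  exact Integrable.fintype_prod (f := fun i (t : ℝ) => t ^ m i) fun i =>
    integrable_pow_gaussianReal _

theorem map_ofLp_stdGaussian :
    (stdGaussian (EuclideanSpace ℝ ι)).map (EuclideanSpace.equiv ι ℝ) = stdGaussianPi ι := by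
  rw [← map_pi_eq_stdGaussian, Measure.map_map (by fun_prop) (by fun_prop)]
  exact Measure.map_id

instance isGaussian_stdGaussianPi : IsGaussian (stdGaussianPi ι) := by
  rw [← map_ofLp_stdGaussian]
  infer_instance

theorem measurePreserving_rotation_stdGaussianPi (θ : ℝ) :
    MeasurePreserving (ContinuousLinearMap.rotation θ)
      ((stdGaussianPi ι).prod (stdGaussianPi ι)) ((stdGaussianPi ι).prod (stdGaussianPi ι)) := by
  refine ⟨by fun_prop, IsGaussian.map_rotation_eq_self ?_ θ⟩
  rw [← map_ofLp_stdGaussian, integral_map (by fun_prop) (by fun_prop)]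
  simp only [id]
  rw [(EuclideanSpace.equiv ι ℝ).integral_comp_comm]
  simp

theorem map_dotProduct_stdGaussianPi (c : ι → ℝ) :
    (stdGaussianPi ι).map (c ⬝ᵥ ·) = (gaussianReal 0 1).map (√(∑ i, c i ^ 2) * ·) := by
  have hform : (c ⬝ᵥ ·) ∘ EuclideanSpace.equiv ι ℝ = innerSL ℝ (WithLp.toLp 2 c) := by
    ext y
    simp [PiLp.inner_apply, dotProduct, mul_comm]
  rw [← map_ofLp_stdGaussian, Measure.map_map (by fun_prop) (by fun_prop), hform,
    IsGaussian.map_eq_gaussianReal, integral_strongDual_stdGaussian, variance_dual_stdGaussian,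
    innerSL_apply_norm, gaussianReal_map_const_mul, EuclideanSpace.norm_eq]
  simp only [Real.norm_eq_abs, sq_abs, mul_zero, mul_one]
  congr 1
  ext
  simp

theorem integral_comp_dotProduct_stdGaussianPi {f : ℝ → ℝ} (hf : Measurable f) (c : ι → ℝ) :
    ∫ y, f (c ⬝ᵥ y) ∂stdGaussianPi ι = ∫ t, f (√(∑ i, c i ^ 2) * t) ∂gaussianReal 0 1 := by
  rw [← integral_map (φ := (c ⬝ᵥ ·)) (by fun_prop) hf.aestronglyMeasurable,
    map_dotProduct_stdGaussianPi, integral_map (by fun_prop) hf.aestronglyMeasurable]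

theorem integral_dotProduct_sq (c : ι → ℝ) :
    ∫ y, (c ⬝ᵥ y) ^ 2 ∂stdGaussianPi ι = ∑ i, c i ^ 2 := by
  rw [integral_comp_dotProduct_stdGaussianPi (f := (· ^ 2)) (by fun_prop)]
  simp only [mul_pow, integral_const_mul, integral_sq_gaussianReal, mul_one]
  exact Real.sq_sqrt (Finset.sum_nonneg fun i _ => sq_nonneg _)

theorem half_sqrt_le_integral_abs_dotProduct (c : ι → ℝ) :
    √(∑ i, c i ^ 2) / 2 ≤ ∫ y, |c ⬝ᵥ y| ∂stdGaussianPi ι := by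
  rw [integral_comp_dotProduct_stdGaussianPi (f := (|·|)) measurable_id.abs]
  simp only [abs_mul, integral_const_mul, abs_of_nonneg (Real.sqrt_nonneg _)]
  rw [div_eq_mul_one_div]
  exact mul_le_mul_of_nonneg_left half_le_integral_abs_gaussianReal (Real.sqrt_nonneg _)

theorem memLp_eval_stdGaussianPi (f : MvPolynomial ι ℝ) :
    MemLp (fun x => eval x f) 2 (stdGaussianPi ι) :=
  (memLp_two_iff_integrable_sq (continuous_eval f).aestronglyMeasurable).2
    ((integrable_eval_stdGaussianPi (f ^ 2)).congr (.of_forall fun x => map_pow (eval x) f 2))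

theorem memLp_dotProduct_stdGaussianPi (c : ι → ℝ) :
    MemLp (c ⬝ᵥ ·) 2 (stdGaussianPi ι) := by
  have h := memLp_eval_stdGaussianPi (∑ i, C (c i) * X i)
  simpa only [map_sum, map_mul, eval_C, eval_X, dotProduct] using h

theorem memLp_mulVec_dotProduct (A : Matrix κ ι ℝ) :
    MemLp (fun z => (A *ᵥ z.1) ⬝ᵥ z.2) 2 ((stdGaussianPi ι).prod (stdGaussianPi κ)) := by
  refine memLp_finsetSum _ fun j _ => (memLp_two_iff_integrable_sq (by fun_prop)).2 ?_
  simp only [mul_pow]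
  exact (memLp_dotProduct_stdGaussianPi (A j)).integrable_sq.mul_prod
    (by simpa using (memLp_eval_stdGaussianPi (X j)).integrable_sq)

theorem integral_mulVec_dotProduct_sq (A : Matrix κ ι ℝ) :
    ∫ z, ((A *ᵥ z.1) ⬝ᵥ z.2) ^ 2 ∂(stdGaussianPi ι).prod (stdGaussianPi κ) =
      ∑ j, ∑ i, A j i ^ 2 := by
  rw [integral_prod _ (memLp_mulVec_dotProduct A).integrable_sq]
  simp only [integral_dotProduct_sq]
  rw [integral_finsetSum (f := fun j y => (A *ᵥ y) j ^ 2) _ fun j _ =>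
    (memLp_dotProduct_stdGaussianPi (A j)).integrable_sq]
  exact Finset.sum_congr rfl fun j _ => integral_dotProduct_sq (A j)

theorem quarter_sqrt_le_integral_abs_mulVec_dotProduct (A : Matrix κ ι ℝ) :
    √(∑ j, ∑ i, A j i ^ 2) / 4 ≤
      ∫ z, |(A *ᵥ z.1) ⬝ᵥ z.2| ∂(stdGaussianPi ι).prod (stdGaussianPi κ) := by
  have hint := ((memLp_mulVec_dotProduct A).integrable one_le_two).abs
  have hrow (j : κ) : Integrable (fun y => |A j ⬝ᵥ y|) (stdGaussianPi ι) :=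
    ((memLp_dotProduct_stdGaussianPi (A j)).integrable one_le_two).abs
  calc √(∑ j, ∑ i, A j i ^ 2) / 4
      = √(∑ j, (√(∑ i, A j i ^ 2) / 2) ^ 2) / 2 := by
        simp only [div_pow, ← Finset.sum_div,
          Real.sq_sqrt (Finset.sum_nonneg fun _ _ => sq_nonneg _)]
        rw [Real.sqrt_div' _ (by norm_num), Real.sqrt_sq two_pos.le]
        ring
    _ ≤ √(∑ j, (∫ y, |A j ⬝ᵥ y| ∂stdGaussianPi ι) ^ 2) / 2 := by
        gcongr
        exact half_sqrt_le_integral_abs_dotProduct _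
    _ ≤ (∫ y, √(∑ j, |A j ⬝ᵥ y| ^ 2) ∂stdGaussianPi ι) / 2 := by
        gcongr
        exact sqrt_sum_sq_integral_le_integral_sqrt hrow
    _ = ∫ y, √(∑ j, (A *ᵥ y) j ^ 2) / 2 ∂stdGaussianPi ι := by
        simp only [sq_abs, integral_div]
        rfl
    _ ≤ ∫ y, ∫ w, |(A *ᵥ y) ⬝ᵥ w| ∂stdGaussianPi κ ∂stdGaussianPi ι := by
        refine integral_mono (Integrable.div_const ?_ 2) hint.integral_prod_left fun y =>
          half_sqrt_le_integral_abs_dotProduct _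
        simp only [← sq_abs ((A *ᵥ _) _)]
        exact integrable_sqrt_sum_sq hrow
    _ = _ := (integral_prod _ hint).symm

theorem le_measureReal_dotProduct_lt_mulVec_dotProduct (p : κ → ℝ) (A : Matrix κ ι ℝ) {t : ℝ}
    (ht : 0 ≤ t) (h : 64 * t ^ 2 * ∑ j, p j ^ 2 < ∑ j, ∑ i, A j i ^ 2) :
    1 / 64 ≤ ((stdGaussianPi ι).prod (stdGaussianPi κ)).real
      {z | t * |p ⬝ᵥ z.2| < |(A *ᵥ z.1) ⬝ᵥ z.2|} := by
  set γ := (stdGaussianPi ι).prod (stdGaussianPi κ)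
  set N := √(∑ j, ∑ i, A j i ^ 2) with hN
  have hp0 : 0 ≤ ∑ j, p j ^ 2 := Finset.sum_nonneg fun j _ => sq_nonneg _
  have hNpos : 0 < N := Real.sqrt_pos.2 (lt_of_le_of_lt (mul_nonneg (by positivity) hp0) h)
  have hlin : MemLp (p ⬝ᵥ ·) 2 (stdGaussianPi κ) := memLp_dotProduct_stdGaussianPi p
  have hlower := quarter_sqrt_le_integral_abs_mulVec_dotProduct A
  have hupper : ∫ z, t * |p ⬝ᵥ z.2| ∂γ ≤ N / 8 := by
    calc ∫ z, t * |p ⬝ᵥ z.2| ∂γ = t * ∫ w, |p ⬝ᵥ w| ∂stdGaussianPi κ := by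
          rw [integral_const_mul, integral_fun_snd fun w : κ → ℝ => |p ⬝ᵥ w|]
          simp
      _ ≤ t * √(∑ j, p j ^ 2) := by
          rw [← integral_dotProduct_sq p]
          gcongr
          exact integral_abs_le_sqrt_integral_sq hlin (by fun_prop)
      _ = √(64 * t ^ 2 * ∑ j, p j ^ 2) / 8 := by
          rw [show 64 * t ^ 2 = (8 * t) ^ 2 by ring, Real.sqrt_mul (sq_nonneg _),
            Real.sqrt_sq (by positivity)]
          ring
      _ ≤ N / 8 := div_le_div_of_nonneg_right (Real.sqrt_le_sqrt h.le) (by norm_num)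
  have hpz := integral_sub_integral_le_sqrt_mul_sqrt (μ := γ) (memLp_mulVec_dotProduct A).abs
    (((hlin.integrable one_le_two).comp_snd (stdGaussianPi ι)).abs.const_mul t)
    (fun z => abs_nonneg _) (fun z => by positivity)
    (Continuous.measurable (by fun_prop)).abs (by fun_prop)
  simp only [Pi.abs_apply, sq_abs] at hpz
  rw [integral_mulVec_dotProduct_sq, ← hN] at hpz
  have hsqrt : 1 / 8 ≤ √(γ.real {z | t * |p ⬝ᵥ z.2| < |(A *ᵥ z.1) ⬝ᵥ z.2|}) :=
    le_of_mul_le_mul_left (by linarith) hNpos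
  rw [Real.le_sqrt' (by norm_num)] at hsqrt
  linarith

end StdGaussianPi

/-! ### Gradients of polynomials at Gaussian points -/

section Gradient

open scoped Matrix

variable {ι J : Type*}

/-- The gradient at `x` of the polynomial `f`, as a vector of partial derivatives. -/
noncomputable def polyGradient (f : MvPolynomial ι ℝ) (x : ι → ℝ) : ι → ℝ :=
  fun i => eval x (pderiv i f)

@[fun_prop]
theorem continuous_polyGradient (f : MvPolynomial ι ℝ) : Continuous (polyGradient f) :=
  continuous_pi fun _ => continuous_eval _

variable [Fintype ι]

theorem hasDerivAt_eval_comp (f : MvPolynomial ι ℝ) {c : ℝ → ι → ℝ} {c' : ι → ℝ} {s : ℝ}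
    (hc : ∀ i, HasDerivAt (fun s => c s i) (c' i) s) :
    HasDerivAt (fun s => eval (c s) f) (polyGradient f (c s) ⬝ᵥ c') s := by
  simp only [polyGradient, dotProduct]
  induction f using MvPolynomial.induction_on with
  | C a => simpa using hasDerivAt_const s a
  | add p q hp hq =>
    simp only [map_add, add_mul, Finset.sum_add_distrib]
    exact hp.add hq
  | mul_X p i hp =>
    classical
    simp only [map_mul, eval_X]
    refine (hp.mul (hc i)).congr_deriv ?_
    simp only [Derivation.leibniz, pderiv_X, smul_eq_mul, map_add, map_mul, eval_X, add_mul,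
      Finset.sum_add_distrib, Finset.sum_mul, Pi.single_apply]
    rw [add_comm]
    congr 1
    · simp [apply_ite]
    · exact Finset.sum_congr rfl fun i _ => by ring

theorem volume_rotation_mul_abs_eval_lt_le {d : ℕ} (hd : 1 ≤ d) {f : MvPolynomial ι ℝ}
    (hf : f.totalDegree ≤ d) {t : ℝ} (ht : 0 < t) (z : (ι → ℝ) × (ι → ℝ)) :
    volume.restrict (Set.Icc (0 : ℝ) 1) {θ | ContinuousLinearMap.rotation θ z ∈
      {z | t * |eval z.1 f| < |polyGradient f z.1 ⬝ᵥ z.2|}} ≤ ENNReal.ofReal (48 * d ^ 2 / t) := by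
  have htrig := IsTrigPolynomial.eval_mvPolynomial hf fun i =>
    IsTrigPolynomial.cos_mul_add_sin_mul (z.1 i) (z.2 i)
  refine htrig.volume_lt_abs_deriv_le (fun θ => hasDerivAt_eval_comp f fun i => ?_) hd ht
  simp only [ContinuousLinearMap.rotation_apply, Pi.add_apply, Pi.smul_apply, smul_eq_mul]
  exact ((Real.hasDerivAt_cos θ).mul_const _).add ((Real.hasDerivAt_sin θ).mul_const _)

/-- Rotating an independent pair of Gaussian points turns a polynomial and its directional
derivative into a trigonometric polynomial and its derivative. -/
theorem measure_mul_abs_eval_lt_le {d : ℕ} (hd : 1 ≤ d) {f : MvPolynomial ι ℝ}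
    (hf : f.totalDegree ≤ d) {t : ℝ} (ht : 0 < t) :
    ((stdGaussianPi ι).prod (stdGaussianPi ι))
      {z | t * |eval z.1 f| < |polyGradient f z.1 ⬝ᵥ z.2|} ≤ ENNReal.ofReal (48 * d ^ 2 / t) := by
  have hf' : Continuous fun z : (ι → ℝ) × (ι → ℝ) => eval z.1 f :=
    (continuous_eval f).comp continuous_fst
  have : IsProbabilityMeasure (volume.restrict (Set.Icc (0 : ℝ) 1)) := ⟨by simp⟩
  refine measure_le_of_forall_measurePreserving (r := fun θ => ContinuousLinearMap.rotation θ)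
    (Continuous.measurable ?_) measurePreserving_rotation_stdGaussianPi
    (measurableSet_lt (hf'.abs.const_mul t).measurable (Continuous.measurable (by fun_prop)))
    (volume_rotation_mul_abs_eval_lt_le hd hf ht)
  simp only [Function.uncurry_def, ContinuousLinearMap.rotation_apply]
  fun_prop

variable [Fintype J] {d : ℕ} {p : J → MvPolynomial ι ℝ} {t : ℝ}

theorem polyGradient_sum_C_mul_dotProduct (w : J → ℝ) (p : J → MvPolynomial ι ℝ) (x y : ι → ℝ) :
    polyGradient (∑ j, C (w j) * p j) x ⬝ᵥ y =
      (Matrix.of (fun j => polyGradient (p j) x) *ᵥ y) ⬝ᵥ w := by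
  have hgrad : polyGradient (∑ j, C (w j) * p j) x =
      w ᵥ* Matrix.of fun j => polyGradient (p j) x := by
    ext i
    simp [polyGradient, Matrix.vecMul, dotProduct]
  rw [hgrad, ← Matrix.dotProduct_mulVec, dotProduct_comm]

theorem measurableSet_mul_abs_dotProduct_lt (p : J → MvPolynomial ι ℝ) (t : ℝ) :
    MeasurableSet {z : ((ι → ℝ) × (ι → ℝ)) × (J → ℝ) | t * |(fun j => eval z.1.1 (p j)) ⬝ᵥ z.2| <
      |(Matrix.of (fun j => polyGradient (p j) z.1.1) *ᵥ z.1.2) ⬝ᵥ z.2|} := by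
  have hp (j : J) : Continuous fun z : ((ι → ℝ) × (ι → ℝ)) × (J → ℝ) => eval z.1.1 (p j) :=
    (continuous_eval _).comp (by fun_prop)
  have hA : Continuous fun z : ((ι → ℝ) × (ι → ℝ)) × (J → ℝ) =>
      Matrix.of fun j => polyGradient (p j) z.1.1 :=
    continuous_pi fun j => (continuous_polyGradient (p j)).comp (by fun_prop)
  exact measurableSet_lt
    (((continuous_pi hp).dotProduct continuous_snd).abs.const_mul t).measurable
    ((hA.matrix_mulVec (by fun_prop)).dotProduct continuous_snd).abs.measurable

/-- The bound for one polynomial, applied to the combination of the `p j` with coefficients `w`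
for each fixed `w`. -/
theorem measure_mul_abs_dotProduct_lt_le (hd : 1 ≤ d) (hp : ∀ j, (p j).totalDegree ≤ d)
    (ht : 0 < t) :
    (((stdGaussianPi ι).prod (stdGaussianPi ι)).prod (stdGaussianPi J))
      {z | t * |(fun j => eval z.1.1 (p j)) ⬝ᵥ z.2| <
        |(Matrix.of (fun j => polyGradient (p j) z.1.1) *ᵥ z.1.2) ⬝ᵥ z.2|} ≤
      ENNReal.ofReal (48 * d ^ 2 / t) := by
  refine prod_apply_le_of_section_le (measurableSet_mul_abs_dotProduct_lt p t) fun w => ?_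
  have hdeg : (∑ j, C (w j) * p j).totalDegree ≤ d :=
    totalDegree_finsetSum_le fun j _ => (totalDegree_mul _ _).trans (by simpa using hp j)
  have heval (x : ι → ℝ) :
      (fun j => eval x (p j)) ⬝ᵥ w = eval x (∑ j, C (w j) * p j) := by
    simp [dotProduct, mul_comm]
  simp only [Set.preimage_ofPred_eq, heval, ← polyGradient_sum_C_mul_dotProduct]
  exact measure_mul_abs_eval_lt_le hd hdeg ht

theorem measure_mul_sum_sq_eval_lt_le (hd : 1 ≤ d) (hp : ∀ j, (p j).totalDegree ≤ d) (ht : 0 < t) :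
    stdGaussianPi ι {x | 64 * t ^ 2 * ∑ j, eval x (p j) ^ 2 <
      ∑ j, ∑ i, eval x (pderiv i (p j)) ^ 2} ≤ ENNReal.ofReal (3072 * d ^ 2 / t) := by
  set B := {z : ((ι → ℝ) × (ι → ℝ)) × (J → ℝ) | t * |(fun j => eval z.1.1 (p j)) ⬝ᵥ z.2| <
    |(Matrix.of (fun j => polyGradient (p j) z.1.1) *ᵥ z.1.2) ⬝ᵥ z.2|}
  have hB : MeasurableSet B := measurableSet_mul_abs_dotProduct_lt p t
  have hassoc := (measurePreserving_prodAssoc (stdGaussianPi ι) (stdGaussianPi ι)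
    (stdGaussianPi J)).symm
  set G := {x : ι → ℝ | 64 * t ^ 2 * ∑ j, eval x (p j) ^ 2 <
    ∑ j, ∑ i, eval x (pderiv i (p j)) ^ 2}
  have h : ENNReal.ofReal (1 / 64) * stdGaussianPi ι G ≤ ENNReal.ofReal (48 * d ^ 2 / t) := by
    refine le_trans ?_ (measure_mul_abs_dotProduct_lt_le hd hp ht)
    rw [← hassoc.measure_preimage hB.nullMeasurableSet]
    refine mul_measure_le_prod_of_le_section (hassoc.measurable hB) fun x hx => ?_
    exact ENNReal.ofReal_le_of_le_toReal
      (le_measureReal_dotProduct_lt_mulVec_dotProduct (fun j => eval x (p j))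
        (Matrix.of fun j => polyGradient (p j) x) ht.le hx)
  calc stdGaussianPi ι G = ENNReal.ofReal 64 * (ENNReal.ofReal (1 / 64) * stdGaussianPi ι G) := by
        rw [← mul_assoc, ← ENNReal.ofReal_mul (by norm_num)]
        norm_num
    _ ≤ ENNReal.ofReal 64 * ENNReal.ofReal (48 * d ^ 2 / t) := by gcongr
    _ = ENNReal.ofReal (3072 * d ^ 2 / t) := by
        rw [← ENNReal.ofReal_mul (by norm_num)]
        ring_nf

end Gradient

/-! ### Substitution and coefficientwise linear maps -/

section PolynomialAlgebra

variable {ι κ R S : Type*}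

theorem totalDegree_pderiv_le [CommSemiring R] (i : ι) (f : MvPolynomial ι R) :
    (pderiv i f).totalDegree ≤ f.totalDegree - 1 := by
  refine Finset.sup_le fun m hm => Nat.le_sub_one_of_lt ?_
  rw [mem_support_iff, coeff_pderiv] at hm
  have hlt := le_totalDegree (mem_support_iff.2 (left_ne_zero_of_mul hm))
  rw [Finsupp.sum_add_index' (fun _ => rfl) fun _ _ _ => rfl, Finsupp.sum_single_index rfl] at hlt
  exact Nat.lt_of_succ_le hlt

theorem totalDegree_aeval_le [CommSemiring R] [CommSemiring S] [Algebra R S]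
    {p : ι → MvPolynomial κ S} (hp : ∀ i, (p i).totalDegree ≤ 1) (f : MvPolynomial ι R) :
    (aeval p f).totalDegree ≤ f.totalDegree := by
  rw [aeval_def, eval₂_eq]
  refine totalDegree_finsetSum_le fun m hm => (totalDegree_mul _ _).trans ?_
  rw [IsScalarTower.algebraMap_apply R S, algebraMap_eq, totalDegree_C, zero_add]
  calc (∏ i ∈ m.support, p i ^ m i).totalDegree
      ≤ ∑ i ∈ m.support, (p i ^ m i).totalDegree := totalDegree_finsetProd _ _
    _ ≤ ∑ i ∈ m.support, m i := Finset.sum_le_sum fun i _ =>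
        (totalDegree_pow _ _).trans (mul_le_of_le_one_right (Nat.zero_le _) (hp i))
    _ ≤ f.totalDegree := le_totalDegree hm

theorem totalDegree_C_add_C_mul_X_le [CommSemiring R] (a b : R) (i : ι) :
    (C a + C b * X i : MvPolynomial ι R).totalDegree ≤ 1 := by
  rw [C_mul_X_eq_monomial]
  refine (totalDegree_add _ _).trans (max_le ?_ ((totalDegree_monomial_le _ _).trans ?_))
  · rw [totalDegree_C]
    exact zero_le_one
  · exact (Finsupp.sum_single_index rfl).le

theorem pderiv_aeval_C_add_C_mul_X [CommSemiring R] [CommSemiring S] [Algebra R S] (c : ι → S)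
    (b : S) (i : ι) (f : MvPolynomial ι R) :
    pderiv i (aeval (fun j => C (c j) + C b * X j : ι → MvPolynomial ι S) f) =
      C b * aeval (fun j => C (c j) + C b * X j) (pderiv i f) := by
  induction f using MvPolynomial.induction_on with
  | C a => simp
  | add p q hp hq => simp only [map_add, hp, hq, mul_add]
  | mul_X p j hp =>
    have hX : pderiv i (X j : MvPolynomial ι S) =
        aeval (fun j => C (c j) + C b * X j) (pderiv i (X j : MvPolynomial ι R)) := by
      rcases eq_or_ne j i with rfl | hj <;> simp [*]
    simp only [map_mul, map_add, pderiv_mul, hp, aeval_X, pderiv_C, hX, zero_add,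
      zero_mul]
    ring

/-- Applies the linear map `L` to each coefficient, as when a functional acts on a polynomial in
some variables whose coefficients are polynomials in others. -/
noncomputable def mapCoeff [CommSemiring R] [CommSemiring S] [Algebra R S] (L : S →ₗ[R] R)
    (f : MvPolynomial ι S) : MvPolynomial ι R :=
  AddMonoidAlgebra.map L.toAddMonoidHom f

section MapCoeff

variable [CommSemiring R] [CommSemiring S] [Algebra R S] (L : S →ₗ[R] R)

@[simp]
theorem coeff_mapCoeff (m : ι →₀ ℕ) (f : MvPolynomial ι S) :
    coeff m (mapCoeff L f) = L (coeff m f) :=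
  rfl

theorem totalDegree_mapCoeff_le (f : MvPolynomial ι S) :
    (mapCoeff L f).totalDegree ≤ f.totalDegree := by
  refine Finset.sup_mono fun m hm => ?_
  rw [mem_support_iff, coeff_mapCoeff] at hm
  exact mem_support_iff.2 fun h => hm (by rw [h, map_zero])

theorem pderiv_mapCoeff (i : ι) (f : MvPolynomial ι S) :
    pderiv i (mapCoeff L f) = mapCoeff L (pderiv i f) := by
  ext m
  simp only [coeff_pderiv, coeff_mapCoeff]
  rw [← Nat.cast_add_one, ← Nat.cast_add_one, ← nsmul_eq_mul', ← nsmul_eq_mul', map_nsmul]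

theorem eval_mapCoeff (x : ι → R) (f : MvPolynomial ι S) :
    eval x (mapCoeff L f) = L (eval (fun i => algebraMap R S (x i)) f) := by
  classical
  induction f using MvPolynomial.induction_on' with
  | monomial m c =>
    have hmono : mapCoeff L (monomial m c) = monomial m (L c) := by
      ext k
      simp only [coeff_mapCoeff, coeff_monomial, apply_ite L, map_zero]
    simp only [hmono, eval_monomial, Finsupp.prod, ← map_pow, ← map_prod]
    rw [mul_comm c, ← Algebra.smul_def, map_smul, smul_eq_mul, mul_comm]
  | add p q hp hq =>
    have hadd : mapCoeff L (p + q) = mapCoeff L p + mapCoeff L q := AddMonoidAlgebra.map_add _ _ _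
    rw [hadd, map_add, hp, hq, map_add, map_add]

end MapCoeff

end PolynomialAlgebra

/-! ### Hermite functionals -/

section Hermite

variable {ι : Type*} [Fintype ι]

/-- The expectation of a polynomial at a standard Gaussian point, as a linear functional. -/
noncomputable def gaussianMean : MvPolynomial ι ℝ →ₗ[ℝ] ℝ where
  toFun f := ∫ x, eval x f ∂stdGaussianPi ι
  map_add' f g := by
    simp only [map_add]
    exact integral_add (integrable_eval_stdGaussianPi f) (integrable_eval_stdGaussianPi g)
  map_smul' c f := by
    simp only [smul_eval, integral_const_mul, RingHom.id_apply, smul_eq_mul]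

theorem gaussianMean_apply (f : MvPolynomial ι ℝ) :
    gaussianMean f = ∫ x, eval x f ∂stdGaussianPi ι :=
  rfl

theorem gaussianMean_monomial (m : ι →₀ ℕ) (c : ℝ) :
    gaussianMean (monomial m c) = c * ∏ i, ∫ t, t ^ m i ∂gaussianReal 0 1 := by
  simp only [gaussianMean_apply, eval_monomial, Finsupp.prod_fintype, pow_zero, implies_true,
    integral_const_mul]
  rw [stdGaussianPi, integral_fintype_prod_eq_prod (fun i t => t ^ m i)]

theorem gaussianMean_X_mul (i : ι) (f : MvPolynomial ι ℝ) :
    gaussianMean (X i * f) = gaussianMean (pderiv i f) := by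
  classical
  induction f using MvPolynomial.induction_on' with
  | monomial m c =>
    have hsplit (m' : ι →₀ ℕ) (h : ∀ j ≠ i, m' j = m j) :
        ∏ j, ∫ t, t ^ m' j ∂gaussianReal 0 1 = (∫ t, t ^ m' i ∂gaussianReal 0 1) *
          ∏ j ∈ Finset.univ.erase i, ∫ t, t ^ m j ∂gaussianReal 0 1 := by
      rw [← Finset.mul_prod_erase _ _ (Finset.mem_univ i)]
      congr 1
      exact Finset.prod_congr rfl fun j hj => by rw [h j (Finset.ne_of_mem_erase hj)]
    rw [pderiv_monomial, X, monomial_mul, one_mul, gaussianMean_monomial, gaussianMean_monomial,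
      hsplit (Finsupp.single i 1 + m) fun j hj => by simp [hj],
      hsplit (m - Finsupp.single i 1) fun j hj => by simp [hj]]
    simp only [Finsupp.coe_add, Finsupp.coe_tsub, Pi.add_apply, Pi.sub_apply,
      Finsupp.single_eq_same, add_comm 1, integral_pow_succ_gaussianReal]
    ring
  | add p q hp hq => rw [mul_add, map_add, hp, hq, map_add, map_add]

/-- The probabilists' Hermite polynomial `∏ i, He_{α i}(X i)`, without normalization. -/
noncomputable def hermitePoly (α : ι → ℕ) : MvPolynomial ι ℝ :=
  ∏ i, Polynomial.aeval (X i) ((Polynomial.hermite (α i)).map (Int.castRingHom ℝ))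

theorem hermitePoly_add_single [DecidableEq ι] (α : ι → ℕ) (i : ι) :
    hermitePoly (α + Pi.single i 1) = X i * hermitePoly α - pderiv i (hermitePoly α) := by
  set H : ι → ℕ → MvPolynomial ι ℝ := fun j k =>
    Polynomial.aeval (X j) ((Polynomial.hermite k).map (Int.castRingHom ℝ))
  have hderiv (j : ι) (k : ℕ) : pderiv i (H j k) =
      Polynomial.aeval (X j) ((Polynomial.hermite k).derivative.map (Int.castRingHom ℝ)) *
        (pderiv i (X j)) := by
    rw [← Polynomial.derivative_map]
    exact Derivation.map_aeval (pderiv i) _ _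
  have hsucc (k : ℕ) : H i (k + 1) = X i * H i k - pderiv i (H i k) := by
    simp [H, hderiv, Polynomial.hermite_succ]
  have hsplit (β : ι → ℕ) (hβ : ∀ j ≠ i, β j = α j) :
      hermitePoly β = H i (β i) * ∏ j ∈ Finset.univ.erase i, H j (α j) := by
    rw [hermitePoly, ← Finset.mul_prod_erase _ _ (Finset.mem_univ i)]
    congr 1
    exact Finset.prod_congr rfl fun j hj => by rw [hβ j (Finset.ne_of_mem_erase hj)]
  have hconst : pderiv i (∏ j ∈ Finset.univ.erase i, H j (α j)) = 0 :=
    Finset.prod_induction _ (fun f => pderiv i f = 0)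
      (fun p q hp hq => by rw [pderiv_mul, hp, hq, zero_mul, mul_zero, add_zero]) pderiv_one
      fun j hj => by rw [hderiv, pderiv_X_of_ne (Finset.ne_of_mem_erase hj), mul_zero]
  rw [hsplit (α + Pi.single i 1) fun j hj => by simp [hj], hsplit α fun _ _ => rfl, pderiv_mul,
    hconst, Pi.add_apply, Pi.single_eq_same, hsucc]
  ring

/-- The linear functional `f ↦ E[f(x) ∏ i, He_{α i}(x i)]`, which is `√(∏ i, (α i)!)` times the
Hermite coefficient of `f`. -/
noncomputable def hermiteFunctional (α : ι → ℕ) : MvPolynomial ι ℝ →ₗ[ℝ] ℝ :=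
  gaussianMean ∘ₗ LinearMap.mulRight ℝ (hermitePoly α)

theorem hermiteFunctional_apply (α : ι → ℕ) (f : MvPolynomial ι ℝ) :
    hermiteFunctional α f = gaussianMean (f * hermitePoly α) :=
  rfl

theorem hermiteFunctional_zero : hermiteFunctional (0 : ι → ℕ) = gaussianMean := by
  ext
  simp [hermiteFunctional_apply, hermitePoly]

theorem hermiteFunctional_add_single [DecidableEq ι] (α : ι → ℕ) (i : ι) (f : MvPolynomial ι ℝ) :
    hermiteFunctional (α + Pi.single i 1) f = hermiteFunctional α (pderiv i f) := by
  have hibp := gaussianMean_X_mul i (f * hermitePoly α)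
  rw [pderiv_mul, map_add] at hibp
  rw [hermiteFunctional_apply, hermiteFunctional_apply, hermitePoly_add_single, mul_sub, map_sub,
    mul_left_comm, hibp, add_sub_cancel_right]

theorem exists_add_single_eq_of_sum_eq_succ [DecidableEq ι] {α : ι → ℕ} {k : ℕ}
    (hα : ∑ i, α i = k + 1) : ∃ (β : ι → ℕ) (i : ι), ∑ i, β i = k ∧ β + Pi.single i 1 = α := by
  obtain ⟨i, -, hi⟩ : ∃ i ∈ Finset.univ, 0 < α i := Finset.sum_pos_iff.1 (hα ▸ Nat.succ_pos k)
  have hle : Pi.single i 1 ≤ α := fun j => by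
    rcases eq_or_ne j i with rfl | hj
    · rwa [Pi.single_eq_same]
    · simp [hj]
  refine ⟨α - Pi.single i 1, i, ?_, tsub_add_cancel_of_le hle⟩
  rw [← tsub_add_cancel_of_le hle] at hα
  simpa [Finset.sum_add_distrib, Finset.sum_pi_single'] using hα

theorem hermiteFunctional_eq_zero_of_totalDegree_lt {α : ι → ℕ} {f : MvPolynomial ι ℝ}
    (hf : f.totalDegree < ∑ i, α i) : hermiteFunctional α f = 0 := by
  classical
  induction hk : ∑ i, α i generalizing α f with
  | zero => omega
  | succ k ih =>
    obtain ⟨β, i, hβ, rfl⟩ := exists_add_single_eq_of_sum_eq_succ hk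
    rw [hermiteFunctional_add_single]
    rcases Nat.eq_zero_or_pos f.totalDegree with hzero | hpos
    · rw [totalDegree_eq_zero_iff_eq_C.1 hzero, pderiv_C, map_zero]
    · exact ih (by have := totalDegree_pderiv_le i f; omega) hβ

/-- The total squared Hermite coefficient of `f` at degree `k`, for the unnormalized Hermite
polynomials. -/
noncomputable def hermiteWeight [DecidableEq ι] (k : ℕ) (f : MvPolynomial ι ℝ) : ℝ :=
  ∑ α ∈ Finset.piAntidiag Finset.univ k, hermiteFunctional α f ^ 2

theorem hermiteWeight_nonneg [DecidableEq ι] (k : ℕ) (f : MvPolynomial ι ℝ) :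
    0 ≤ hermiteWeight k f :=
  Finset.sum_nonneg fun _ _ => sq_nonneg _

theorem hermiteWeight_zero [DecidableEq ι] (f : MvPolynomial ι ℝ) :
    hermiteWeight 0 f = gaussianMean f ^ 2 := by
  simp [hermiteWeight, hermiteFunctional_zero]

theorem gaussianMean_sq_le (f : MvPolynomial ι ℝ) :
    gaussianMean f ^ 2 ≤ ∫ x, eval x f ^ 2 ∂stdGaussianPi ι := by
  have hvar := variance_nonneg (fun x => eval x f) (stdGaussianPi ι)
  rw [variance_eq_sub (memLp_eval_stdGaussianPi f)] at hvar
  exact sub_nonneg.1 hvar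

theorem hermiteWeight_succ_le [DecidableEq ι] (k : ℕ) (f : MvPolynomial ι ℝ) :
    hermiteWeight (k + 1) f ≤ ∑ i, hermiteWeight k (pderiv i f) := by
  have hcover : Finset.piAntidiag Finset.univ (k + 1) ⊆
      (Finset.piAntidiag Finset.univ k ×ˢ Finset.univ).image
        fun z : (ι → ℕ) × ι => z.1 + Pi.single z.2 1 := fun α hα => by
    obtain ⟨β, i, hβ, rfl⟩ := exists_add_single_eq_of_sum_eq_succ (Finset.mem_piAntidiag.1 hα).1
    exact Finset.mem_image_of_mem (fun z : (ι → ℕ) × ι => z.1 + Pi.single z.2 1)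
      (a := (β, i)) (by simpa using hβ)
  calc hermiteWeight (k + 1) f
      ≤ ∑ α ∈ (Finset.piAntidiag Finset.univ k ×ˢ Finset.univ).image
          fun z : (ι → ℕ) × ι => z.1 + Pi.single z.2 1, hermiteFunctional α f ^ 2 :=
        Finset.sum_le_sum_of_subset_of_nonneg hcover fun _ _ _ => sq_nonneg _
    _ ≤ ∑ z ∈ Finset.piAntidiag Finset.univ k ×ˢ Finset.univ,
          hermiteFunctional (z.1 + Pi.single z.2 1) f ^ 2 :=
        Finset.sum_image_le_of_nonneg fun _ _ => sq_nonneg _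
    _ = ∑ i, hermiteWeight k (pderiv i f) := by
        simp only [Finset.sum_product_right, hermiteFunctional_add_single, hermiteWeight]

end Hermite

section HyperVar

variable {n d : ℕ}

theorem hermiteMv_eq_div (α : Fin n → ℕ) (x : Fin n → ℝ) :
    hermiteMv α x = eval x (hermitePoly α) / ∏ i, √(Nat.factorial (α i)) := by
  simp only [hermiteMv, hermiteFn, hermitePoly, Finset.prod_div_distrib, map_prod]
  congr 1
  refine Finset.prod_congr rfl fun i _ => ?_
  rw [← MvPolynomial.coe_aeval_eq_eval, RingHom.coe_coe, ← Polynomial.aeval_algHom_apply, aeval_X,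
    Polynomial.coe_aeval_eq_eval]

theorem hermiteCoeff_sq_le (f : MvPolynomial (Fin n) ℝ) (α : Fin n → ℕ) :
    hermiteCoeff f α ^ 2 ≤ hermiteFunctional α f ^ 2 := by
  have heq : hermiteCoeff f α = hermiteFunctional α f / ∏ i, √(Nat.factorial (α i)) := by
    simp only [hermiteCoeff, hermiteCoeffF, hermiteMv_eq_div, ← mul_div_assoc, ← map_mul]
    exact integral_div _ _
  have hone : 1 ≤ ∏ i, √(Nat.factorial (α i) : ℝ) := Finset.one_le_prod fun i _ =>
    Real.one_le_sqrt.2 (Nat.one_le_cast.2 (Nat.factorial_pos _))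
  rw [heq, div_pow]
  exact div_le_self (sq_nonneg _) (one_le_pow₀ hone)

theorem hyperVar_le_sum_hermiteWeight {f : MvPolynomial (Fin n) ℝ} (hf : f.totalDegree ≤ d)
    (R : ℝ) :
    hyperVar R f ≤ ∑ k ∈ Finset.range d, R ^ (2 * (k + 1)) * hermiteWeight (k + 1) f := by
  have hmem (α : Fin n → ℕ) (k : ℕ) :
      α ∈ Finset.piAntidiag Finset.univ k ↔ ∑ i, α i = k := by simp
  have hzero (α : Fin n → ℕ) (hα : d < ∑ i, α i) : hermiteCoeff f α = 0 := by
    have h := hermiteCoeff_sq_le f α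
    rw [hermiteFunctional_eq_zero_of_totalDegree_lt (hf.trans_lt hα), zero_pow two_ne_zero] at h
    exact pow_eq_zero_iff two_ne_zero |>.1 (le_antisymm h (sq_nonneg _))
  rw [hyperVar, hyperVarGE, tsum_eq_sum
    (s := (Finset.range d).biUnion fun k => Finset.piAntidiag Finset.univ (k + 1)),
    Finset.sum_biUnion]
  · refine Finset.sum_le_sum fun k _ => ?_
    rw [hermiteWeight, Finset.mul_sum]
    refine Finset.sum_le_sum fun α hα => ?_
    rw [(hmem α _).1 hα, if_pos (Nat.le_add_left 1 k)]
    exact mul_le_mul_of_nonneg_left (hermiteCoeff_sq_le f α) ((even_two_mul _).pow_nonneg R)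
  · intro k _ l _ hkl
    refine Finset.disjoint_left.2 fun α hk hl => hkl ?_
    exact Nat.succ_injective (((hmem α _).1 hk).symm.trans ((hmem α _).1 hl))
  · intro α hα
    rw [ite_eq_right_iff]
    intro hpos
    rw [hzero α ?_, zero_pow two_ne_zero, mul_zero]
    by_contra! hle
    exact hα (Finset.mem_biUnion.2 ⟨∑ i, α i - 1, Finset.mem_range.2 (by omega),
      (hmem α _).2 (by omega)⟩)

end HyperVar

/-! ### Zooms of polynomials -/

section Zoom

variable {n d : ℕ} {lam : ℝ}

/-- The map `g ↦ zoom g lam x` as an algebra homomorphism. -/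
noncomputable def zoomAlgHom (lam : ℝ) (x : Fin n → ℝ) :
    MvPolynomial (Fin n) ℝ →ₐ[ℝ] MvPolynomial (Fin n) ℝ :=
  aeval fun i => C (√(1 - lam) * x i) + C √lam * X i

theorem totalDegree_zoom_le (g : MvPolynomial (Fin n) ℝ) (lam : ℝ) (x : Fin n → ℝ) :
    (zoom g lam x).totalDegree ≤ g.totalDegree :=
  totalDegree_aeval_le (fun i => totalDegree_C_add_C_mul_X_le _ _ i) g

theorem pderiv_zoom (g : MvPolynomial (Fin n) ℝ) (lam : ℝ) (x : Fin n → ℝ) (i : Fin n) :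
    pderiv i (zoom g lam x) = C √lam * zoom (pderiv i g) lam x :=
  pderiv_aeval_C_add_C_mul_X _ _ i g

/-- The zoom of `g` as a polynomial in the base point, whose coefficients are polynomials in the
zoomed variable. -/
noncomputable def zoomFamily (lam : ℝ) (g : MvPolynomial (Fin n) ℝ) :
    MvPolynomial (Fin n) (MvPolynomial (Fin n) ℝ) :=
  aeval (fun i => C (C √lam * X i) + C (C √(1 - lam)) * X i) g

theorem eval_zoomFamily (lam : ℝ) (g : MvPolynomial (Fin n) ℝ) (x : Fin n → ℝ) :
    eval (fun i => C (x i)) (zoomFamily lam g) = zoom g lam x := by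
  induction g using MvPolynomial.induction_on with
  | C a => simp [zoomFamily, zoom, algebraMap_eq]
  | add p q hp hq =>
    simp only [zoomFamily, zoom, map_add] at hp hq ⊢
    rw [hp, hq]
  | mul_X p i hp =>
    simp only [zoomFamily, zoom, map_mul, map_add, aeval_X, eval_C, eval_X] at hp ⊢
    rw [hp]
    ring

/-- The unnormalized Hermite coefficient of index `α` of the zoom of `g`, as a polynomial in the
base point. -/
noncomputable def zoomHermite (lam : ℝ) (α : Fin n → ℕ) (g : MvPolynomial (Fin n) ℝ) :
    MvPolynomial (Fin n) ℝ :=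
  mapCoeff (hermiteFunctional α) (zoomFamily lam g)

theorem eval_zoomHermite (lam : ℝ) (α : Fin n → ℕ) (g : MvPolynomial (Fin n) ℝ) (x : Fin n → ℝ) :
    eval x (zoomHermite lam α g) = hermiteFunctional α (zoom g lam x) := by
  rw [zoomHermite, eval_mapCoeff, ← eval_zoomFamily, algebraMap_eq]

theorem totalDegree_zoomHermite_le (lam : ℝ) (α : Fin n → ℕ) (g : MvPolynomial (Fin n) ℝ) :
    (zoomHermite lam α g).totalDegree ≤ g.totalDegree :=
  (totalDegree_mapCoeff_le _ _).trans
    (totalDegree_aeval_le (fun i => totalDegree_C_add_C_mul_X_le _ _ i) g)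

theorem eval_pderiv_zoomHermite (lam : ℝ) (α : Fin n → ℕ) (g : MvPolynomial (Fin n) ℝ) (i : Fin n)
    (x : Fin n → ℝ) : eval x (pderiv i (zoomHermite lam α g)) =
      √(1 - lam) * hermiteFunctional α (zoom (pderiv i g) lam x) := by
  have h : pderiv i (zoomFamily lam g) = C (C √(1 - lam)) * zoomFamily lam (pderiv i g) :=
    pderiv_aeval_C_add_C_mul_X _ _ i g
  rw [zoomHermite, pderiv_mapCoeff, h, eval_mapCoeff, map_mul, eval_C, algebraMap_eq,
    eval_zoomFamily, ← smul_eq_C_mul, map_smul, smul_eq_mul]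

/-- Differentiating in the base point and in the zoomed variable differ by the factor
`√(1 - lam) / √lam`, so a level of the zoom is controlled by the gradient of the previous one. -/
theorem mul_hermiteWeight_succ_zoom_le (hlam0 : 0 ≤ lam) (hlam1 : lam ≤ 1) (k : ℕ)
    (g : MvPolynomial (Fin n) ℝ) (x : Fin n → ℝ) :
    (1 - lam) * hermiteWeight (k + 1) (zoom g lam x) ≤ lam *
      ∑ α ∈ Finset.piAntidiag Finset.univ k, ∑ i, eval x (pderiv i (zoomHermite lam α g)) ^ 2 := by
  have hweight (i : Fin n) : hermiteWeight k (pderiv i (zoom g lam x)) =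
      lam * hermiteWeight k (zoom (pderiv i g) lam x) := by
    simp only [hermiteWeight, pderiv_zoom, ← smul_eq_C_mul, map_smul, smul_eq_mul, mul_pow,
      Real.sq_sqrt hlam0, Finset.mul_sum]
  refine (mul_le_mul_of_nonneg_left (hermiteWeight_succ_le k _) (sub_nonneg.2 hlam1)).trans_eq ?_
  simp only [hweight, eval_pderiv_zoomHermite, mul_pow, Real.sq_sqrt (sub_nonneg.2 hlam1),
    ← Finset.mul_sum]
  rw [mul_left_comm, Finset.sum_comm]
  rfl

theorem measure_hermiteWeight_succ_zoom_lt_le {J : Type*} [Fintype J]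
    {q : J → MvPolynomial (Fin n) ℝ} (hd : 1 ≤ d) (hq : ∀ j, (q j).totalDegree ≤ d)
    (hlam0 : 0 ≤ lam) (hlam1 : lam ≤ 1) {t : ℝ} (ht : 0 < t) (k : ℕ) :
    stdGaussianPi (Fin n) {x | 64 * t ^ 2 * (lam * ∑ j, hermiteWeight k (zoom (q j) lam x)) <
      (1 - lam) * ∑ j, hermiteWeight (k + 1) (zoom (q j) lam x)} ≤
      ENNReal.ofReal (3072 * d ^ 2 / t) := by
  let p (z : J × Finset.piAntidiag (Finset.univ : Finset (Fin n)) k) := zoomHermite lam z.2 (q z.1)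
  have hp (z) : (p z).totalDegree ≤ d := (totalDegree_zoomHermite_le _ _ _).trans (hq z.1)
  refine (measure_mono fun x hx => ?_).trans (measure_mul_sum_sq_eval_lt_le hd hp ht)
  have hval : ∑ z, eval x (p z) ^ 2 = ∑ j, hermiteWeight k (zoom (q j) lam x) := by
    simp only [p, Fintype.sum_prod_type, eval_zoomHermite]
    exact Finset.sum_congr rfl fun j _ => Finset.sum_coe_sort _
      fun α => hermiteFunctional α (zoom (q j) lam x) ^ 2
  have hgrad : (1 - lam) * ∑ j, hermiteWeight (k + 1) (zoom (q j) lam x) ≤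
      lam * ∑ z, ∑ i, eval x (pderiv i (p z)) ^ 2 := by
    rw [Fintype.sum_prod_type, Finset.mul_sum, Finset.mul_sum]
    refine Finset.sum_le_sum fun j _ => ?_
    rw [Finset.sum_coe_sort _ fun α => ∑ i, eval x (pderiv i (zoomHermite lam α (q j))) ^ 2]
    exact mul_hermiteWeight_succ_zoom_le hlam0 hlam1 k (q j) x
  rw [Set.mem_ofPred_eq, ← hval, mul_left_comm] at hx
  exact lt_of_mul_lt_mul_left (hx.trans_le hgrad) hlam0

end Zoom

/-! ### Square-integrable families of polynomials -/

section SquareIntegrableFamily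

theorem exists_norm_sum_smul_sq_eq {S E : Type*} [Fintype S] [NormedAddCommGroup E]
    [InnerProductSpace ℝ E] (v : S → E) : ∃ (r : ℕ) (w : Fin r → S → ℝ), ∀ a : S → ℝ,
      ‖∑ m, a m • v m‖ ^ 2 = ∑ j, (∑ m, a m * w j m) ^ 2 := by
  obtain ⟨r, w, hw⟩ := Matrix.posSemidef_iff_eq_sum_vecMulVec.1 (Matrix.posSemidef_gram ℝ v)
  refine ⟨r, w, fun a => ?_⟩
  rw [← real_inner_self_eq_norm_sq, ← Matrix.star_dotProduct_gram_mulVec, hw, Matrix.sum_mulVec,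
    dotProduct_sum]
  refine Finset.sum_congr rfl fun j _ => ?_
  rw [Matrix.vecMulVec_mulVec, op_smul_eq_smul, dotProduct_smul, star_trivial, star_trivial,
    smul_eq_mul, dotProduct_comm, sq]
  rfl

variable {Ω ι : Type*} [MeasurableSpace Ω] {ν : Measure Ω}

theorem exists_integral_sum_mul_sq_eq {S : Type*} [Fintype S] {c : S → Ω → ℝ}
    (hc : ∀ m, MemLp (c m) 2 ν) : ∃ (r : ℕ) (w : Fin r → S → ℝ), ∀ a : S → ℝ,
      ∫ υ, (∑ m, a m * c m υ) ^ 2 ∂ν = ∑ j, (∑ m, a m * w j m) ^ 2 := by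
  obtain ⟨r, w, hw⟩ := exists_norm_sum_smul_sq_eq fun m => (hc m).toLp
  refine ⟨r, w, fun a => ?_⟩
  have hae : ⇑(∑ m, a m • (hc m).toLp) =ᵐ[ν] fun υ => ∑ m, a m * c m υ := by
    filter_upwards [Lp.coeFn_finsetSum Finset.univ fun m => a m • (hc m).toLp,
      ae_all_iff.2 fun m => Lp.coeFn_smul (a m) (hc m).toLp,
      ae_all_iff.2 fun m => (hc m).coeFn_toLp] with υ hsum hsmul hcoe
    rw [hsum, Finset.sum_apply]
    exact Finset.sum_congr rfl fun m _ => by rw [hsmul, Pi.smul_apply, hcoe, smul_eq_mul]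
  rw [← hw, ← real_inner_self_eq_norm_sq, L2.inner_def]
  refine integral_congr_ae (hae.mono fun υ h => ?_)
  simp only [h, real_inner_self_eq_norm_sq, Real.norm_eq_abs, sq_abs]

/-- A random polynomial of degree at most `d` with square-integrable coefficients. For Gaussian
`υ`, every nice distribution is of this form. -/
structure SquareIntegrableFamily (ν : Measure Ω) (d : ℕ) (g : Ω → MvPolynomial ι ℝ) : Prop where
  totalDegree_le (υ : Ω) : (g υ).totalDegree ≤ d
  memLp_coeff (m : ι →₀ ℕ) : MemLp (fun υ => coeff m (g υ)) 2 ν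

theorem linearMap_monomial {R : Type*} [CommSemiring R] (L : MvPolynomial ι R →ₗ[R] R) (m : ι →₀ ℕ)
    (c : R) : L (monomial m c) = L (monomial m 1) * c := by
  rw [mul_comm, ← smul_eq_mul, ← map_smul, smul_monomial, smul_eq_mul, mul_one]

theorem exists_finset_forall_linearMap_eq_sum [Finite ι] (d : ℕ) :
    ∃ s : Finset (ι →₀ ℕ), (∀ m ∈ s, m.degree ≤ d) ∧
      ∀ f : MvPolynomial ι ℝ, f.totalDegree ≤ d → ∀ L : MvPolynomial ι ℝ →ₗ[ℝ] ℝ,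
        L f = ∑ m : s, L (monomial m 1) * coeff m f := by
  refine ⟨(Finsupp.finite_of_degree_le d).toFinset, by simp, fun f hf L => ?_⟩
  rw [Finset.sum_coe_sort _ fun m => L (monomial m 1) * coeff m f]
  have hsupp : f.support ⊆ (Finsupp.finite_of_degree_le d).toFinset := fun m hm =>
    (Set.Finite.mem_toFinset _).2 ((le_totalDegree hm).trans hf)
  conv_lhs => rw [f.as_sum, map_sum]
  rw [← Finset.sum_subset hsupp fun m _ hm => by rw [notMem_support_iff.1 hm, mul_zero]]
  exact Finset.sum_congr rfl fun m _ => linearMap_monomial L m _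

namespace SquareIntegrableFamily

variable [Finite ι] {d : ℕ} {g : Ω → MvPolynomial ι ℝ}

theorem memLp_linearMap (hg : SquareIntegrableFamily ν d g) (L : MvPolynomial ι ℝ →ₗ[ℝ] ℝ) :
    MemLp (fun υ => L (g υ)) 2 ν := by
  obtain ⟨s, -, hs⟩ := exists_finset_forall_linearMap_eq_sum (ι := ι) d
  simp only [hs _ (hg.totalDegree_le _)]
  exact memLp_finsetSum _ fun m _ => (hg.memLp_coeff m).const_mul _

/-- Averages of squared linear functionals only depend on the Gram matrix of the coefficients, so
the random polynomial can be replaced by finitely many deterministic ones. -/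
theorem exists_integral_linearMap_sq_eq (hg : SquareIntegrableFamily ν d g) :
    ∃ (r : ℕ) (q : Fin r → MvPolynomial ι ℝ), (∀ j, (q j).totalDegree ≤ d) ∧
      ∀ L : MvPolynomial ι ℝ →ₗ[ℝ] ℝ, ∫ υ, L (g υ) ^ 2 ∂ν = ∑ j, L (q j) ^ 2 := by
  obtain ⟨s, hsd, hs⟩ := exists_finset_forall_linearMap_eq_sum (ι := ι) d
  obtain ⟨r, w, hw⟩ := exists_integral_sum_mul_sq_eq fun m : s => hg.memLp_coeff m
  refine ⟨r, fun j => ∑ m : s, monomial (m : ι →₀ ℕ) (w j m), fun j => ?_, fun L => ?_⟩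
  · exact totalDegree_finsetSum_le fun m _ => (totalDegree_monomial_le _ _).trans (hsd m m.2)
  · simp only [hs _ (hg.totalDegree_le _), hw, map_sum, linearMap_monomial L _ (w _ _)]

protected theorem zoom {n : ℕ} {g : Ω → MvPolynomial (Fin n) ℝ}
    (hg : SquareIntegrableFamily ν d g) (lam : ℝ) (x : Fin n → ℝ) :
    SquareIntegrableFamily ν d fun υ => zoom (g υ) lam x where
  totalDegree_le υ := (totalDegree_zoom_le _ _ _).trans (hg.totalDegree_le υ)
  memLp_coeff m := hg.memLp_linearMap (lcoeff ℝ m ∘ₗ (zoomAlgHom lam x).toLinearMap)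

theorem integrable_norm2sq {n : ℕ} {g : Ω → MvPolynomial (Fin n) ℝ}
    (hg : SquareIntegrableFamily ν d g) : Integrable (fun υ => norm2sq (g υ)) ν := by
  obtain ⟨s, -, hs⟩ := exists_finset_forall_linearMap_eq_sum (ι := Fin n) d
  obtain ⟨r, w, hw⟩ := exists_integral_sum_mul_sq_eq (ν := stdGaussianPi (Fin n))
    fun m : s => memLp_eval_stdGaussianPi (monomial (m : Fin n →₀ ℕ) (1 : ℝ))
  have hnorm (υ : Ω) : norm2sq (g υ) = ∑ j, (∑ m : s, coeff m (g υ) * w j m) ^ 2 := by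
    rw [← hw, norm2sq]
    refine integral_congr_ae (.of_forall fun x => congrArg (· ^ 2) ?_)
    refine (hs (g υ) (hg.totalDegree_le υ) (aeval x).toLinearMap).trans ?_
    exact Finset.sum_congr rfl fun m _ => mul_comm _ _
  have hmem (j : Fin r) : MemLp (fun υ => ∑ m : s, coeff m (g υ) * w j m) 2 ν :=
    memLp_finsetSum _ fun m _ => (hg.memLp_coeff m).mul_const (w j m)
  simp only [hnorm]
  exact integrable_finsetSum _ fun j _ => (hmem j).integrable_sq

theorem integrable_hermiteWeight {κ : Type*} [Fintype κ] [DecidableEq κ]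
    {g : Ω → MvPolynomial κ ℝ} (hg : SquareIntegrableFamily ν d g) (k : ℕ) :
    Integrable (fun υ => hermiteWeight k (g υ)) ν :=
  integrable_finsetSum _ fun α _ => (hg.memLp_linearMap (hermiteFunctional α)).integrable_sq

end SquareIntegrableFamily

end SquareIntegrableFamily

theorem NiceFamily.squareIntegrableFamily {n I d : ℕ} {g : (Fin I → ℝ) → MvPolynomial (Fin n) ℝ}
    (hg : NiceFamily n I d g) : SquareIntegrableFamily (gaussianN I) d g where
  totalDegree_le := hg.1
  memLp_coeff m := by
    obtain ⟨P, -, hP⟩ := hg.2 m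
    simp only [hP]
    exact memLp_eval_stdGaussianPi P

/-! ### Local hyperconcentration -/

section Hyperconcentration

variable {Ω : Type*} [MeasurableSpace Ω] {ν : Measure Ω} {n d : ℕ}
  {g : Ω → MvPolynomial (Fin n) ℝ}

theorem SquareIntegrableFamily.exists_integral_hermiteWeight_zoom_eq
    (hg : SquareIntegrableFamily ν d g) (lam : ℝ) :
    ∃ (r : ℕ) (q : Fin r → MvPolynomial (Fin n) ℝ), (∀ j, (q j).totalDegree ≤ d) ∧
      ∀ k x, ∫ υ, hermiteWeight k (zoom (g υ) lam x) ∂ν =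
        ∑ j, hermiteWeight k (zoom (q j) lam x) := by
  obtain ⟨r, q, hqd, hq⟩ := hg.exists_integral_linearMap_sq_eq
  refine ⟨r, q, hqd, fun k x => ?_⟩
  simp only [hermiteWeight]
  rw [integral_finsetSum _ fun α _ =>
    ((hg.zoom lam x).memLp_linearMap (hermiteFunctional α)).integrable_sq, Finset.sum_comm]
  exact Finset.sum_congr rfl fun α _ => hq (hermiteFunctional α ∘ₗ (zoomAlgHom lam x).toLinearMap)

theorem SquareIntegrableFamily.measure_exists_integral_hermiteWeight_succ_zoom_lt_le
    (hg : SquareIntegrableFamily ν d g) (hd : 1 ≤ d) {lam t : ℝ} (hlam0 : 0 ≤ lam)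
    (hlam1 : lam ≤ 1) (ht : 0 < t) :
    stdGaussianPi (Fin n) {x | ∃ k < d,
      64 * t ^ 2 * (lam * ∫ υ, hermiteWeight k (zoom (g υ) lam x) ∂ν) <
        (1 - lam) * ∫ υ, hermiteWeight (k + 1) (zoom (g υ) lam x) ∂ν} ≤
      ENNReal.ofReal (3072 * d ^ 3 / t) := by
  obtain ⟨r, q, hqd, hq⟩ := hg.exists_integral_hermiteWeight_zoom_eq lam
  simp only [hq]
  let B (k : ℕ) : Set (Fin n → ℝ) :=
    {x | 64 * t ^ 2 * (lam * ∑ j, hermiteWeight k (zoom (q j) lam x)) <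
      (1 - lam) * ∑ j, hermiteWeight (k + 1) (zoom (q j) lam x)}
  calc _ ≤ stdGaussianPi (Fin n) (⋃ k ∈ Finset.range d, B k) :=
        measure_mono <| by
          rintro x ⟨k, hk, hx⟩
          exact Set.mem_biUnion (Finset.mem_coe.2 (Finset.mem_range.2 hk)) hx
    _ ≤ ∑ _k ∈ Finset.range d, ENNReal.ofReal (3072 * d ^ 2 / t) :=
        (measure_biUnion_finset_le _ _).trans (Finset.sum_le_sum fun k _ =>
          measure_hermiteWeight_succ_zoom_lt_le hd hqd hlam0 hlam1 ht k)
    _ = ENNReal.ofReal (3072 * d ^ 3 / t) := by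
        rw [Finset.sum_const, Finset.card_range, ← ENNReal.ofReal_nsmul, nsmul_eq_mul]
        congr 1
        ring

theorem sum_pow_mul_le_of_forall_succ_le {W : ℕ → ℝ} (hW : ∀ k, 0 ≤ W k) {c R ε : ℝ}
    (hε0 : 0 ≤ ε) (hε : ε ≤ 1) (hc : R ^ 2 * c ≤ ε / 2) (hstep : ∀ k < d, W (k + 1) ≤ c * W k) :
    ∑ k ∈ Finset.range d, R ^ (2 * (k + 1)) * W (k + 1) ≤ ε * W 0 := by
  set U : ℕ → ℝ := fun k => R ^ (2 * k) * W k
  have hR (k : ℕ) : 0 ≤ R ^ (2 * k) := (even_two_mul k).pow_nonneg R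
  have hU (k : ℕ) : 0 ≤ U k := mul_nonneg (hR k) (hW k)
  have hdecay : ∑ k ∈ Finset.range d, U (k + 1) ≤ ε / 2 * ∑ k ∈ Finset.range d, U k := by
    rw [Finset.mul_sum]
    refine Finset.sum_le_sum fun k hk => ?_
    calc U (k + 1) ≤ R ^ (2 * (k + 1)) * (c * W k) :=
          mul_le_mul_of_nonneg_left (hstep k (Finset.mem_range.1 hk)) (hR _)
      _ = R ^ 2 * c * U k := by ring
      _ ≤ ε / 2 * U k := mul_le_mul_of_nonneg_right hc (hU k)
  have hshift : ∑ k ∈ Finset.range d, U (k + 1) + U 0 = ∑ k ∈ Finset.range d, U k + U d := by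
    rw [← Finset.sum_range_succ', Finset.sum_range_succ]
  have hzero : U 0 = W 0 := by simp [U]
  have hsum : 0 ≤ ∑ k ∈ Finset.range d, U (k + 1) := Finset.sum_nonneg fun k _ => hU _
  have hle : ε / 2 * ∑ k ∈ Finset.range d, U k ≤
      ε / 2 * (∑ k ∈ Finset.range d, U (k + 1) + U 0) := by
    rw [hshift]
    gcongr
    exact le_add_of_nonneg_right (hU d)
  have hhalf := mul_le_mul_of_nonneg_right hε hsum
  change ∑ k ∈ Finset.range d, U (k + 1) ≤ ε * W 0
  linarith [hzero ▸ hle]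

theorem SquareIntegrableFamily.integral_hyperVar_le_of_forall_hermiteWeight_succ_le
    (hg : SquareIntegrableFamily ν d g) {R ε c : ℝ} (hε0 : 0 ≤ ε) (hε : ε ≤ 1)
    (hc : R ^ 2 * c ≤ ε / 2) (hstep : ∀ k < d,
      ∫ υ, hermiteWeight (k + 1) (g υ) ∂ν ≤ c * ∫ υ, hermiteWeight k (g υ) ∂ν) :
    ∫ υ, hyperVar R (g υ) ∂ν ≤ ε * ∫ υ, norm2sq (g υ) ∂ν := by
  have hnonneg (υ : Ω) : 0 ≤ hyperVar R (g υ) := tsum_nonneg fun α => by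
    split_ifs
    · exact mul_nonneg ((even_two_mul _).pow_nonneg R) (sq_nonneg _)
    · exact le_rfl
  have hint (k : ℕ) := (hg.integrable_hermiteWeight (k + 1)).const_mul (R ^ (2 * (k + 1)))
  calc ∫ υ, hyperVar R (g υ) ∂ν
      ≤ ∫ υ, ∑ k ∈ Finset.range d, R ^ (2 * (k + 1)) * hermiteWeight (k + 1) (g υ) ∂ν :=
        integral_mono_of_nonneg (.of_forall hnonneg) (integrable_finsetSum _ fun k _ => hint k)
          (.of_forall fun υ => hyperVar_le_sum_hermiteWeight (hg.totalDegree_le υ) R)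
    _ = ∑ k ∈ Finset.range d, R ^ (2 * (k + 1)) * ∫ υ, hermiteWeight (k + 1) (g υ) ∂ν := by
        rw [integral_finsetSum _ fun k _ => hint k]
        simp only [integral_const_mul]
    _ ≤ ε * ∫ υ, hermiteWeight 0 (g υ) ∂ν :=
        sum_pow_mul_le_of_forall_succ_le
          (fun k => integral_nonneg fun υ => hermiteWeight_nonneg k (g υ)) hε0 hε hc hstep
    _ ≤ ε * ∫ υ, norm2sq (g υ) ∂ν :=
        mul_le_mul_of_nonneg_left (integral_mono (hg.integrable_hermiteWeight 0)
          hg.integrable_norm2sq fun υ => (hermiteWeight_zero _).trans_le (gaussianMean_sq_le _)) hε0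

theorem SquareIntegrableFamily.measure_not_integral_hyperVar_zoom_le_le
    (hg : SquareIntegrableFamily ν d g) (hd : 1 ≤ d) {R ε lam t : ℝ} (hε0 : 0 ≤ ε) (hε : ε ≤ 1)
    (hlam0 : 0 ≤ lam) (hlam1 : lam ≤ 1 / 2) (ht : 0 < t)
    (hc : R ^ 2 * (128 * t ^ 2 * lam) ≤ ε / 2) :
    gaussianN n {x | ¬ (∫ υ, hyperVar R (zoom (g υ) lam x) ∂ν ≤
      ε * ∫ υ, norm2sq (zoom (g υ) lam x) ∂ν)} ≤ ENNReal.ofReal (3072 * d ^ 3 / t) := by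
  refine (measure_mono fun x hx => ?_).trans
    (hg.measure_exists_integral_hermiteWeight_succ_zoom_lt_le hd hlam0 (by linarith) ht)
  by_contra hnot
  rw [Set.mem_ofPred_eq] at hx hnot
  push Not at hnot
  refine hx ((hg.zoom lam x).integral_hyperVar_le_of_forall_hermiteWeight_succ_le hε0 hε hc
    fun k hk => ?_)
  have hhalf := mul_le_mul_of_nonneg_right (show 1 / 2 ≤ 1 - lam by linarith)
    (integral_nonneg (μ := ν) fun υ => hermiteWeight_nonneg (k + 1) (zoom (g υ) lam x))
  linarith [hnot k hk]

theorem local_hyperconcentration_nice_general (hg : SquareIntegrableFamily ν d g) (hd : 1 ≤ d)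
    {R ε β lam : ℝ} (hR : 1 ≤ R) (hε0 : 0 < ε) (hε : ε ≤ 1) (hβ0 : 0 < β) (hβ : β ≤ 1)
    (hlam0 : 0 ≤ lam) (hlam : lam ≤ ε / R ^ 2 * (β / (2 ^ 16 * d ^ 3)) ^ 2) :
    gaussianN n {x | ¬ (∫ υ, hyperVar R (zoom (g υ) lam x) ∂ν ≤
      ε * ∫ υ, norm2sq (zoom (g υ) lam x) ∂ν)} ≤ ENNReal.ofReal β := by
  have hd3 : (1 : ℝ) ≤ d ^ 3 := one_le_pow₀ (mod_cast hd)
  set t : ℝ := 2 ^ 12 * d ^ 3 / β with ht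
  have ht1 : 1 ≤ t := (one_le_div hβ0).2 (by linarith)
  have hc : R ^ 2 * (128 * t ^ 2 * lam) ≤ ε / 2 := by
    calc R ^ 2 * (128 * t ^ 2 * lam)
        ≤ R ^ 2 * (128 * t ^ 2 * (ε / R ^ 2 * (β / (2 ^ 16 * d ^ 3)) ^ 2)) := by gcongr
      _ = ε / 2 := by
        rw [ht]
        field_simp
        norm_num
  have hlam1 : lam ≤ 1 / 2 := by
    have hone : 1 ≤ R ^ 2 * (128 * t ^ 2) :=
      one_le_mul_of_one_le_of_one_le (one_le_pow₀ hR) (by linarith [one_le_pow₀ (n := 2) ht1])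
    linarith [le_mul_of_one_le_left hlam0 hone]
  have hβt : 3072 * (d : ℝ) ^ 3 / t ≤ β := by
    rw [ht, div_div_eq_mul_div, div_le_iff₀ (by positivity)]
    linarith [mul_pos hβ0 (one_pos.trans_le hd3)]
  exact (hg.measure_not_integral_hyperVar_zoom_le_le hd hε0.le hε hlam0 hlam1
    (one_pos.trans_le ht1) hc).trans (ENNReal.ofReal_le_ofReal hβt)

end Hyperconcentration

theorem div_rpow_mul_log_le {d : ℕ} (hd : 2 ≤ d) {β : ℝ} (hβ0 : 0 < β) (hβ : β ≤ 1) :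
    (β / d) ^ (60 * Real.log d) ≤ (β / (2 ^ 16 * d ^ 3)) ^ 2 := by
  have hd2 : (2 : ℝ) ≤ d := mod_cast hd
  have hlog : ((19 * 2 : ℕ) : ℝ) ≤ 60 * Real.log d := by
    have hmono := Real.log_le_log two_pos hd2
    have hlog2 := Real.log_two_gt_d9
    push_cast
    linarith
  have hbase : β / d ≤ 1 := (div_le_one (by linarith)).2 (by linarith)
  calc (β / d) ^ (60 * Real.log d) ≤ ((β / d) ^ 19) ^ 2 := by
        rw [← pow_mul, ← Real.rpow_natCast]
        exact Real.rpow_le_rpow_of_exponent_ge (by positivity) hbase hlog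
    _ ≤ (β / (2 ^ 16 * d ^ 3)) ^ 2 := by
        rw [div_pow, pow_succ' β, pow_add (d : ℝ) 16 3]
        gcongr
        exact mul_le_of_le_one_right hβ0.le (pow_le_one₀ hβ0.le hβ)

/-- Local hyperconcentration theorem for a nice distribution of polynomials: there is a
universal constant `C` such that for a nice distribution `(g_υ)` of degree-`d`
polynomials (`d ≥ 2`), `R ≥ 1`, `0 < ε ≤ 1`, `0 < β < 1`, and
`0 ≤ λ ≤ (ε/R²)·(β/d)^{C·log d}`, for `x ∼ N(0,1)^n`, except with probability at most
`β`, the family `((g_υ)_{λ|x})_υ` is `(R,ε)`-attenuated on average, i.e.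
`E_υ[HyperVar_R[(g_υ)_{λ|x}]] ≤ ε·E_υ[‖(g_υ)_{λ|x}‖₂²]`. -/
theorem local_hyperconcentration_nice :
    ∃ C : ℝ, ∀ (n I d : ℕ), 2 ≤ d →
      ∀ g : (Fin I → ℝ) → MvPolynomial (Fin n) ℝ, NiceFamily n I d g →
      ∀ R ε β lam : ℝ, 1 ≤ R → 0 < ε → ε ≤ 1 → 0 < β → β < 1 →
      0 ≤ lam → lam ≤ (ε / R ^ 2) * (β / d) ^ (C * Real.log d) →
      gaussianN n {x | ¬ ((∫ υ, hyperVar R (zoom (g υ) lam x) ∂(gaussianN I)) ≤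
          ε * ∫ υ, norm2sq (zoom (g υ) lam x) ∂(gaussianN I))} ≤ ENNReal.ofReal β := by
  refine ⟨60, fun n I d hd g hg R ε β lam hR hε0 hε hβ0 hβ hlam0 hlam => ?_⟩
  refine local_hyperconcentration_nice_general hg.squareIntegrableFamily (by omega) hR hε0 hε hβ0
    hβ.le hlam0 (hlam.trans ?_)
  exact mul_le_mul_of_nonneg_left (div_rpow_mul_log_le hd hβ0 hβ.le) (by positivity)
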